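/- arXiv:1402.1228 — 2 statements merged into one kernel-verified Lean document; each statement's English description precedes it below -/
import Mathlib

section
/- Let p be a prime with p ≡ 1 (mod 8) such that (2/p)₄ = (p/2)₄ = −1, and write p = e² + 16f² with e, f ∈ ℤ. Set π₁ = e + 4fi and π₂ = e − 4fi in ℤ[i]. Let H, H₁, H₂ be the prime ideals of O_k lying above 1+i, π₁, π₂ respectively (so H² = (1+i)O_k, H₁² = π₁O_k, H₂² = π₂O_k). Then [H] = [H₁] = [H₂] in Cl(k), and this common class has order 2. -/
/-!
Let `ψ = 1 + i`. Everything reduces to the two equations `2a² - pb² = ±1`, neither of which has an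
integer solution: the sign `-` is excluded by `(2/p)₄ = -1` (`no_sol_neg`), the sign `+` by
`p ≡ 9 (mod 16)`, that is `(p/2)₄ = -1` (`no_sol_pos`). A descent from the fundamental solution of
`T² - 2pU² = 1` then yields a solution of `x² - 2py² = -1` (`exists_neg_pell`), that is, a unit
`ε = x + y√(2p)` of norm `-1`.

*The classes agree.* Since `(√(2p))² = 2p = -i ψ² π₁ π₂`, the ideals `H₁` and `H₂` have the same
class. In `ℤ[i]` the relation `(x + i)(x - i) = 2py²` gives `x + i = ψ u π z²` with `u` a unit and
`π` one of `π₁`, `π₂` (`neg_pell_factor`). The identity `(x + i + y√(2p))² = 2 (x + i) ε` shows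
that `ψ π` is a unit times a square in `k`, so `H` and the prime above `π` have the same class
(`class_eq_one_add_I`).

*The class of `H` is not trivial.* If `H = (β)`, then `β²` is `ψ` up to a unit; taking relative
norms to `ℚ(√(2p))`, whose ring of integers is `ℤ[√(2p)]` (`int_coords`), produces an element
`a + b√(2p)` of norm `±2`. Then `a` is even and `2 (a/2)² - pb² = ±1`, which is impossible
(`not_principal`). As `H²` is principal, the class of `H` has order `2`.
-/

/- STATEMENT 0: For a prime p ≡ 1 (mod 8) with (2/p)₄ = (p/2)₄ = −1, writing p = e² + 16f²,
π₁ = e + 4fi, π₂ = e − 4fi, and letting H, H₁, H₂ be the prime ideals of O_k (k = ℚ(√(2p), i))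
above 1+i, π₁, π₂ (i.e. H² = (1+i)O_k, H₁² = π₁O_k, H₂² = π₂O_k), the classes of H, H₁, H₂
in Cl(k) coincide and have order 2. -/

open Complex NumberField IntermediateField Polynomial nonZeroDivisors

noncomputable section

lemma integral_of_pow_rat {x : ℂ} {n : ℕ} (hn : n ≠ 0) {q : ℚ} (h : x ^ n = (q : ℂ)) :
    IsIntegral ℚ x := by
  refine ⟨X ^ n - C q, monic_X_pow_sub_C q hn, ?_⟩
  simp [h]

/-- The field k = ℚ(√(2p), i) as a subfield of ℂ. -/
def kfield (p : ℕ) : IntermediateField ℚ ℂ := ℚ⟮(Real.sqrt (2 * p) : ℂ), (Complex.I : ℂ)⟯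

instance (p : ℕ) : FiniteDimensional ℚ (kfield p) := by
  apply IntermediateField.finiteDimensional_adjoin
  rintro x hx
  simp only [Set.mem_insert_iff, Set.mem_singleton_iff] at hx
  rcases hx with rfl | rfl
  · refine integral_of_pow_rat two_ne_zero (q := 2 * p) ?_
    push_cast
    norm_cast
    exact_mod_cast Real.sq_sqrt (by positivity)
  · exact integral_of_pow_rat two_ne_zero (q := -1) (by simp [Complex.I_sq])

instance (p : ℕ) : NumberField (kfield p) := ⟨⟩

open scoped NumberTheorySymbols

/-! ### The equations `2a² - pb² = ±1` and the negative Pell equation -/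

/-- If `2a² - pb² = -1`, then reduction modulo `p` gives `(a/p) = (2/p)₄ = -1`, whereas quadratic
reciprocity gives `(a/p) = 1`. -/
lemma no_sol_neg {p : ℕ} (hp : p.Prime) (hp8 : p % 8 = 1)
    (h2p4 : (2 : ZMod p) ^ ((p - 1) / 4) = -1) (a b : ℤ)
    (hab : 2 * a ^ 2 - p * b ^ 2 = -1) : False := by
  have := Fact.mk hp
  have hp1 := hp.one_lt
  have ha0 : a ≠ 0 := by
    rintro rfl
    have h : (p : ℤ) ∣ 1 := ⟨b ^ 2, by linarith⟩
    have := Int.le_of_dvd one_pos h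
    omega
  have hpodd : Odd p := Nat.odd_iff.mpr (by omega)
  -- the Legendre symbol `(a/p)` equals `(2/p)₄ = -1`
  have hL : J(a | p) = -1 := by
    rw [← jacobiSym.legendreSym.to_jacobiSym]
    have hq : p / 2 = 2 * ((p - 1) / 4) := by omega
    have hev : Even ((p - 1) / 4) := ⟨(p - 1) / 8, by omega⟩
    have h1 : (2 : ZMod p) * (a : ZMod p) ^ 2 = -1 := by
      have := congrArg (Int.cast : ℤ → ZMod p) hab
      push_cast at this
      simpa using this
    have h3 : (a : ZMod p) ^ (p / 2) = -1 := by
      have h4 := congrArg (· ^ ((p - 1) / 4)) h1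
      simp only [mul_pow, h2p4, hev.neg_one_pow] at h4
      rw [hq, pow_mul]
      linear_combination -h4
    have h5 := legendreSym.eq_pow p a
    rw [h3] at h5
    have h6 : (a : ZMod p) ≠ 0 := by
      intro h
      rw [h] at h1
      simp at h1
    rcases legendreSym.eq_one_or_neg_one p h6 with h7 | h7
    · rw [h7] at h5
      have : Fact (2 < p) := ⟨by omega⟩
      exact absurd h5.symm (by simpa using ZMod.neg_one_ne_one)
    · exact h7
  have hJ2 : J(2 | p) = 1 := by
    rw [jacobiSym.at_two hpodd, ZMod.χ₈_nat_eq_if_mod_eight]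
    simp [hp8]; omega
  have hJneg : J(-1 | p) = 1 := by
    rw [jacobiSym.at_neg_one hpodd, ZMod.χ₄_nat_one_mod_four (by omega)]
  obtain ⟨s, m, hm, hsm⟩ := Nat.exists_eq_two_pow_mul_odd (n := a.natAbs) (by simpa using ha0)
  -- the odd part `m` of `a` satisfies `(m/p) = (p/m) = 1` since `p b² ≡ 1 (mod m)`
  have hpm : J((p : ℤ) | m) = 1 := by
    have h1 : J((p : ℤ) * b ^ 2 | m) = 1 := by
      rw [← jacobiSym.one_left m]
      apply jacobiSym.mod_left'
      apply Int.ModEq.symm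
      rw [Int.modEq_iff_dvd]
      have : (m : ℤ) ∣ a := by
        rw [← Int.natAbs_dvd_natAbs, hsm]; simp
      have h2 : (p : ℤ) * b ^ 2 - 1 = a * (2 * a) := by linarith
      rw [h2]
      exact this.mul_right _
    rw [jacobiSym.mul_left, jacobiSym.pow_left] at h1
    rcases jacobiSym.trichotomy b m with h | h | h <;> simp_all
  have hmp : J((m : ℤ) | p) = 1 := by
    rw [← jacobiSym.quadratic_reciprocity_one_mod_four (by omega) hm]; exact hpm
  have hnat : J((a.natAbs : ℤ) | p) = 1 := by
    rw [hsm]; push_cast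
    rw [jacobiSym.mul_left, jacobiSym.pow_left, hJ2, hmp]; simp
  rcases Int.natAbs_eq a with h | h
  · rw [h, hnat] at hL; norm_num at hL
  · rw [h, neg_eq_neg_one_mul, jacobiSym.mul_left, hJneg, hnat] at hL; norm_num at hL

/-- If `2a² - pb² = 1`, then `2` is a square modulo `b`, so `b ≡ ±1 (mod 8)`; this contradicts the
equation modulo `16` when `p ≡ 9 (mod 16)`. -/
lemma no_sol_pos {p : ℕ} (hp16 : p % 16 = 9) (a b : ℤ)
    (hab : 2 * a ^ 2 - p * b ^ 2 = 1) : False := by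
  have hbodd : Odd b := by
    by_contra h
    rw [Int.not_odd_iff_even] at h
    obtain ⟨c, rfl⟩ := h
    have : 2 * (a ^ 2 - p * (2 * c ^ 2)) = 1 := by linarith
    omega
  have hn : Odd b.natAbs := Int.natAbs_odd.mpr hbodd
  have hJ : J(2 | b.natAbs) = 1 := by
    have h1 : J(2 * a ^ 2 | b.natAbs) = 1 := by
      rw [← jacobiSym.one_left b.natAbs]
      apply jacobiSym.mod_left'
      apply Int.ModEq.symm
      rw [Int.modEq_iff_dvd, Int.natAbs_dvd]
      exact ⟨p * b, by linarith⟩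
    rw [jacobiSym.mul_left, jacobiSym.pow_left] at h1
    rcases jacobiSym.trichotomy a b.natAbs with h | h | h <;> simp_all
  rw [jacobiSym.at_two hn, ZMod.χ₈_nat_eq_if_mod_eight] at hJ
  have hb8 : b % 8 = 1 ∨ b % 8 = 7 := by
    split_ifs at hJ <;> omega
  have hb16 : b ^ 2 % 16 = 1 := by
    have : b % 16 = 1 ∨ b % 16 = 7 ∨ b % 16 = 9 ∨ b % 16 = 15 := by omega
    rcases this with h | h | h | h <;> simp [pow_two, Int.mul_emod, h]
  have hpb : (p * b ^ 2 : ℤ) % 16 = 9 := by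
    rw [Int.mul_emod, hb16]; omega
  have h3 : a ^ 2 % 8 = 5 := by omega
  have : a % 8 = 0 ∨ a % 8 = 1 ∨ a % 8 = 2 ∨ a % 8 = 3 ∨ a % 8 = 4 ∨ a % 8 = 5 ∨ a % 8 = 6 ∨
    a % 8 = 7 := by omega
  rcases this with h | h | h | h | h | h | h | h <;> simp [pow_two, Int.mul_emod, h] at h3

lemma exists_sq_of_coprime {a b c : ℤ} (ha : 0 ≤ a) (hb : 0 ≤ b) (h : IsCoprime a b)
    (hc : a * b = c ^ 2) : ∃ x y : ℤ, a = x ^ 2 ∧ b = y ^ 2 := by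
  obtain ⟨x, hx⟩ := Int.sq_of_isCoprime h hc
  obtain ⟨y, hy⟩ := Int.sq_of_isCoprime h.symm (by rwa [mul_comm] at hc)
  exact ⟨x, y, by rcases hx with hx | hx <;> nlinarith [sq_nonneg x],
    by rcases hy with hy | hy <;> nlinarith [sq_nonneg y]⟩

lemma not_isSquare_two_p {p : ℕ} (hp8 : p % 8 = 1) :
    ¬ IsSquare (2 * p : ℤ) := by
  rintro ⟨r, hr⟩
  have : r % 4 = 0 ∨ r % 4 = 1 ∨ r % 4 = 2 ∨ r % 4 = 3 := by omega
  have h4 : (r * r) % 4 = 2 := by omega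
  rcases this with h | h | h | h <;> simp [Int.mul_emod, h] at h4

/-- Let `(2t + 1, 2v)` be the fundamental solution of `T² - 2pU² = 1`. Then `t (t + 1) = 2pv²` with
coprime factors on the left, so `{t, t + 1}` is `{a², 2pb²}` or `{2a², pb²}`. The second shape is
excluded by `no_sol_neg` and `no_sol_pos`, and `t + 1 = a²` by minimality; what remains is
`a² - 2pb² = -1`. -/
lemma exists_neg_pell {p : ℕ} (hp : p.Prime) (hp8 : p % 8 = 1)
    (h2p4 : (2 : ZMod p) ^ ((p - 1) / 4) = -1) (hp16 : p % 16 = 9) :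
    ∃ x y : ℤ, x ^ 2 - 2 * p * y ^ 2 = -1 := by
  have hp0 : (0 : ℤ) < p := by exact_mod_cast hp.pos
  obtain ⟨s, hs1, hs2, hmin⟩ := Pell.IsFundamental.exists_of_not_isSquare (d := 2 * p)
    (by positivity) (not_isSquare_two_p hp8)
  have hs := s.prop
  have hTodd : Odd s.x := by
    by_contra h
    rw [Int.not_odd_iff_even] at h
    obtain ⟨c, hc⟩ := h
    rw [hc] at hs
    have : 2 * (2 * c ^ 2 - p * s.y ^ 2) = 1 := by linarith
    omega
  obtain ⟨t, ht⟩ := hTodd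
  have hUeven : Even s.y := by
    by_contra h
    rw [Int.not_even_iff_odd] at h
    obtain ⟨c, hc⟩ := h
    have hp2 : (p : ℤ) = 2 * (p / 2 : ℤ) + 1 := by omega
    rw [hc, ht, hp2] at hs
    have : 2 * ((t ^ 2 + t) - (2 * (p / 2 : ℤ) + 1) * (2 * c ^ 2 + 2 * c) - (p / 2 : ℤ)) = 1 := by
      linarith
    omega
  obtain ⟨v, hv⟩ := hUeven
  have ht0 : 0 < t := by omega
  have key : t * (t + 1) = 2 * p * v ^ 2 := by
    rw [hv, ht] at hs; linarith
  have hcop : IsCoprime t (t + 1) := ⟨-1, 1, by ring⟩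
  have hpp : Prime (p : ℤ) := Nat.prime_iff_prime_int.mp hp
  have hc2p : IsCoprime (2 : ℤ) p := ⟨-(p / 2 : ℤ), 1, by omega⟩
  have h2 : (2 : ℤ) ∣ t ∨ (2 : ℤ) ∣ t + 1 := by omega
  have hpd : (p : ℤ) ∣ t ∨ (p : ℤ) ∣ t + 1 :=
    hpp.dvd_or_dvd (key ▸ ⟨2 * v ^ 2, by ring⟩)
  have hpos : ∀ {n m : ℤ}, 0 < n → 0 < n * m → 0 ≤ m := fun hn h =>
    (pos_of_mul_pos_right h hn.le).le
  rcases h2 with h2 | h2 <;> rcases hpd with hpd | hpd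
  · obtain ⟨w, hw⟩ := hc2p.mul_dvd h2 hpd
    have hw0 : 0 ≤ w := hpos (n := 2 * p) (by positivity) (hw ▸ ht0)
    have hc : IsCoprime w (t + 1) := hcop.of_isCoprime_of_dvd_left ⟨2 * p, by rw [hw]; ring⟩
    have hk : w * (t + 1) = v ^ 2 := by
      apply mul_left_cancel₀ (a := (2 * p : ℤ)) (by positivity)
      rw [← mul_assoc, ← hw, key]
    obtain ⟨b, a, hb, ha⟩ := exists_sq_of_coprime hw0 (by omega) hc hk
    exfalso
    have hpell : |a| ^ 2 - 2 * p * b ^ 2 = 1 := by rw [sq_abs, ← ha, ← hb, ← hw]; ring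
    have ha1 : 1 < |a| := by
      by_contra h
      have h0 := abs_nonneg a
      have : |a| ^ 2 ≤ 1 := by nlinarith
      rw [sq_abs] at this
      omega
    have h3 := hmin (b := Pell.Solution₁.mk |a| b hpell) (by simpa using ha1)
    rw [Pell.Solution₁.x_mk] at h3
    have : |a| ^ 2 = t + 1 := by rw [sq_abs, ha]
    nlinarith
  · obtain ⟨w, hw⟩ := h2
    obtain ⟨z, hz⟩ := hpd
    have hw0 : 0 ≤ w := hpos (n := 2) (by positivity) (hw ▸ ht0)
    have hz0 : 0 ≤ z := hpos (n := p) (by positivity) (hz ▸ (by omega))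
    have hc : IsCoprime w z := (hcop.of_isCoprime_of_dvd_left ⟨2, by rw [hw]; ring⟩).of_isCoprime_of_dvd_right
      ⟨p, by rw [hz]; ring⟩
    have hk : w * z = v ^ 2 := by
      apply mul_left_cancel₀ (a := (2 * p : ℤ)) (by positivity)
      rw [← key, hz]; nth_rw 1 [hw]; ring
    obtain ⟨a, b, ha, hb⟩ := exists_sq_of_coprime hw0 hz0 hc hk
    exact (no_sol_neg hp hp8 h2p4 a b (by rw [← ha, ← hb, ← hw, ← hz]; ring)).elim
  · obtain ⟨w, hw⟩ := h2
    obtain ⟨z, hz⟩ := hpd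
    have hw0 : 0 ≤ w := hpos (n := 2) (by positivity) (hw ▸ (by omega))
    have hz0 : 0 ≤ z := hpos (n := p) (by positivity) (hz ▸ ht0)
    have hc : IsCoprime w z := (hcop.symm.of_isCoprime_of_dvd_left ⟨2, by rw [hw]; ring⟩).of_isCoprime_of_dvd_right
      ⟨p, by rw [hz]; ring⟩
    have hk : w * z = v ^ 2 := by
      apply mul_left_cancel₀ (a := (2 * p : ℤ)) (by positivity)
      rw [← key, hw]; nth_rw 1 [hz]; ring
    obtain ⟨a, b, ha, hb⟩ := exists_sq_of_coprime hw0 hz0 hc hk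
    exact (no_sol_pos hp16 a b (by rw [← ha, ← hb, ← hw, ← hz]; ring)).elim
  · obtain ⟨w, hw⟩ := hc2p.mul_dvd h2 hpd
    have hw0 : 0 ≤ w := hpos (n := 2 * p) (by positivity) (hw ▸ (by omega))
    have hc : IsCoprime t w := hcop.of_isCoprime_of_dvd_right ⟨2 * p, by rw [hw]; ring⟩
    have hk : t * w = v ^ 2 := by
      apply mul_left_cancel₀ (a := (2 * p : ℤ)) (by positivity)
      rw [← key, hw]; ring
    obtain ⟨a, b, ha, hb⟩ := exists_sq_of_coprime ht0.le hw0 hc hk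
    exact ⟨a, b, by rw [← ha, ← hb, ← hw]; ring⟩

/-! ### Elements of `k` and the real quadratic subfield -/

lemma sqrt_sq (p : ℕ) : ((Real.sqrt (2 * p) : ℝ) : ℂ) ^ 2 = 2 * p := by
  rw [← Complex.ofReal_pow, Real.sq_sqrt (by positivity)]; push_cast; rfl

lemma sqrt_mem (p : ℕ) : ((Real.sqrt (2 * p) : ℝ) : ℂ) ∈ kfield p :=
  IntermediateField.subset_adjoin _ _ (by simp)

lemma I_mem (p : ℕ) : Complex.I ∈ kfield p :=
  IntermediateField.subset_adjoin _ _ (by simp)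

lemma mem_kfield {p : ℕ} {z : ℂ} (hz : z ∈ kfield p) : ∃ a b c d : ℚ,
    z = (a + b * (Real.sqrt (2 * p) : ℂ)) + (c + d * (Real.sqrt (2 * p) : ℂ)) * Complex.I := by
  have hs := sqrt_sq p
  have hI := Complex.I_sq
  have halg : ∀ x ∈ ({(Real.sqrt (2 * p) : ℂ), Complex.I} : Set ℂ), IsAlgebraic ℚ x := by
    intro x hx
    simp only [Set.mem_insert_iff, Set.mem_singleton_iff] at hx
    rcases hx with rfl | rfl
    · exact (integral_of_pow_rat two_ne_zero (q := 2 * p) (by rw [hs]; push_cast; rfl)).isAlgebraic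
    · exact (integral_of_pow_rat two_ne_zero (q := -1) (by simp)).isAlgebraic
  rw [kfield, ← IntermediateField.mem_toSubalgebra,
    IntermediateField.adjoin_toSubalgebra_of_isAlgebraic halg] at hz
  induction hz using Algebra.adjoin_induction with
  | mem x hx =>
    simp only [Set.mem_insert_iff, Set.mem_singleton_iff] at hx
    rcases hx with rfl | rfl
    · exact ⟨0, 1, 0, 0, by simp⟩
    · exact ⟨0, 0, 1, 0, by simp⟩
  | algebraMap r => exact ⟨r, 0, 0, 0, by simp⟩
  | add x y _ _ hx hy =>
    obtain ⟨a, b, c, d, rfl⟩ := hx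
    obtain ⟨a', b', c', d', rfl⟩ := hy
    exact ⟨a + a', b + b', c + c', d + d', by push_cast; ring⟩
  | mul x y _ _ hx hy =>
    obtain ⟨a, b, c, d, rfl⟩ := hx
    obtain ⟨a', b', c', d', rfl⟩ := hy
    refine ⟨a * a' + 2 * p * b * b' - c * c' - 2 * p * d * d', a * b' + b * a' - c * d' - d * c',
      a * c' + c * a' + 2 * p * b * d' + 2 * p * d * b', a * d' + d * a' + b * c' + c * b', ?_⟩
    push_cast
    generalize ((Real.sqrt (2 * p) : ℝ) : ℂ) = s at *
    linear_combination ((b : ℂ) * b' + (b * d' + d * b') * Complex.I + d * d' * Complex.I ^ 2) * hs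
      + (c * c' + (c * d' + d * c') * s + 2 * p * d * d') * hI

lemma int_of_isIntegral {q : ℚ} (h : IsIntegral ℤ q) : ∃ n : ℤ, (n : ℚ) = q := by
  simpa using IsIntegrallyClosed.isIntegral_iff.mp h

lemma sqrt_irrational {p : ℕ} (hp8 : p % 8 = 1) (q : ℚ) :
    (q : ℂ) ≠ (Real.sqrt (2 * p) : ℂ) := by
  intro h
  have h1 := congrArg (· ^ 2) h
  simp only [sqrt_sq] at h1
  have h2 : q ^ 2 = 2 * p := by exact_mod_cast h1
  obtain ⟨n, rfl⟩ := int_of_isIntegral (q := q) (by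
    refine IsIntegral.of_pow (n := 2) two_pos ?_
    rw [h2]
    exact_mod_cast isIntegral_algebraMap (R := ℤ) (A := ℚ) (x := (2 * p : ℤ)))
  have h3 : n ^ 2 = 2 * p := by exact_mod_cast h2
  have : n % 4 = 0 ∨ n % 4 = 1 ∨ n % 4 = 2 ∨ n % 4 = 3 := by omega
  have h4 : (n ^ 2) % 4 = 2 := by omega
  rcases this with h | h | h | h <;> simp [pow_two, Int.mul_emod, h] at h4

/-- The ring of integers of `ℚ(√(2p))` is `ℤ[√(2p)]`. The trace and the norm of an irrational
integer are, up to sign, coefficients of its minimal polynomial, hence integers, and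
`2p ≡ 2 (mod 4)` is squarefree. -/
lemma int_coords {p : ℕ} (hp : p.Prime) (hp8 : p % 8 = 1) (A B : ℚ)
    (h : IsIntegral ℤ ((A : ℂ) + B * (Real.sqrt (2 * p) : ℂ))) :
    ∃ a b : ℤ, (a : ℚ) = A ∧ (b : ℚ) = B := by
  have hs := sqrt_sq p
  by_cases hB : B = 0
  · subst hB
    obtain ⟨a, ha⟩ := int_of_isIntegral (q := A) (by
      have : IsIntegral ℤ (algebraMap ℚ ℂ A) := by simpa using h
      exact (isIntegral_algebraMap_iff (algebraMap ℚ ℂ).injective).mp this)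
    exact ⟨a, 0, ha, by simp⟩
  set z : ℂ := (A : ℂ) + B * (Real.sqrt (2 * p) : ℂ) with hz
  let Q : ℚ[X] := X ^ 2 + C (-(2 * A)) * X + C (A ^ 2 - 2 * p * B ^ 2)
  have hQm : Q.Monic := by simp only [Q]; monicity!
  have hQd : Q.natDegree = 2 := by simp only [Q]; compute_degree!
  have hQz : aeval z Q = 0 := by
    simp only [Q, map_add, map_mul, map_pow, aeval_X, aeval_C, hz]
    simp only [eq_ratCast]
    push_cast
    linear_combination (B : ℂ) ^ 2 * hs
  have hint : IsIntegral ℚ z := h.tower_top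
  have hdeg : 2 ≤ (minpoly ℚ z).natDegree := by
    rw [minpoly.two_le_natDegree_iff hint]
    rintro ⟨q, hq⟩
    apply sqrt_irrational hp8 ((q - A) / B)
    have hB' : (B : ℂ) ≠ 0 := by exact_mod_cast hB
    push_cast
    rw [div_eq_iff hB']
    have : (q : ℂ) = z := by simpa using hq
    rw [this, hz]; ring
  have hmin : minpoly ℚ z = Q :=
    (Polynomial.eq_of_monic_of_dvd_of_natDegree_le (minpoly.monic hint) hQm
      (minpoly.dvd ℚ z hQz) (by omega)).symm
  rw [minpoly.isIntegrallyClosed_eq_field_fractions' ℚ h] at hmin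
  -- `m` is the norm and `n` the negative of the trace; the integer `D` below is `2p * 2B`
  have hc0 := congrArg (fun P => Polynomial.coeff P 0) hmin
  have hc1 := congrArg (fun P => Polynomial.coeff P 1) hmin
  simp [Q, Polynomial.coeff_X, -map_neg, -map_mul, -map_sub] at hc0 hc1
  set m := (minpoly ℤ z).coeff 0
  set n := (minpoly ℤ z).coeff 1
  have hp0 : (p : ℚ) ≠ 0 := by exact_mod_cast hp.ne_zero
  have hD2 : (2 * p * (2 * B)) ^ 2 = ((2 * p * (n ^ 2 - 4 * m) : ℤ) : ℚ) := by
    push_cast; rw [hc0, hc1]; ring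
  obtain ⟨D, hD⟩ := int_of_isIntegral (q := 2 * p * (2 * B)) (by
    refine IsIntegral.of_pow (n := 2) two_pos ?_
    rw [hD2]
    exact isIntegral_algebraMap (R := ℤ) (A := ℚ))
  rw [← hD] at hD2
  have hD2' : D ^ 2 = 2 * p * (n ^ 2 - 4 * m) := by exact_mod_cast hD2
  have hdvd : (2 * p : ℤ) ∣ D := by
    have hc2p : IsCoprime (2 : ℤ) p := ⟨-(p / 2 : ℤ), 1, by omega⟩
    refine hc2p.mul_dvd (Int.prime_two.dvd_of_dvd_pow (n := 2) ?_)
      ((Nat.prime_iff_prime_int.mp hp).dvd_of_dvd_pow (n := 2) ?_)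
    · rw [hD2']; exact ⟨_, mul_assoc _ _ _⟩
    · rw [hD2']; exact ⟨2 * (n ^ 2 - 4 * m), by ring⟩
  obtain ⟨c, rfl⟩ := hdvd
  have hc : (c : ℚ) = 2 * B := by
    apply mul_left_cancel₀ (a := (2 * p : ℚ)) (by positivity)
    rw [← hD]; push_cast; ring
  have hnm : n ^ 2 - 2 * p * c ^ 2 = 4 * m := by
    have : ((n ^ 2 - 2 * p * c ^ 2 : ℤ) : ℚ) = ((4 * m : ℤ) : ℚ) := by
      push_cast; rw [hc, hc0, hc1]; ring
    exact_mod_cast this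
  have hn : Even n := by
    by_contra hn
    rw [Int.not_even_iff_odd] at hn
    obtain ⟨r, hr⟩ := hn
    rw [hr] at hnm
    have : 2 * (2 * m + p * c ^ 2 - 2 * r ^ 2 - 2 * r) = 1 := by linarith
    omega
  obtain ⟨n', hn'⟩ := hn
  have hce : Even c := by
    by_contra hc'
    rw [Int.not_even_iff_odd] at hc'
    obtain ⟨r, hr⟩ := hc'
    have hp2 : (p : ℤ) = 2 * (p / 2 : ℤ) + 1 := by omega
    rw [hn', hr, hp2] at hnm
    have : 2 * (n' ^ 2 - m - (2 * (p / 2 : ℤ) + 1) * (2 * r ^ 2 + 2 * r) - (p / 2 : ℤ)) = 1 := by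
      linarith
    omega
  obtain ⟨c', hc'⟩ := hce
  refine ⟨-n', c', ?_, ?_⟩
  · rw [hn'] at hc1; push_cast at hc1 ⊢; linarith
  · rw [hc'] at hc; push_cast at hc; linarith

/-- The embedding `ℤ[√(2p)] → ℂ` given by the positive square root. -/
def realQuad (p : ℕ) : ℤ√(2 * p : ℤ) →+* ℂ :=
  Zsqrtd.lift ⟨(Real.sqrt (2 * p) : ℂ), by rw [← pow_two, sqrt_sq]; push_cast; rfl⟩

lemma realQuad_injective {p : ℕ} (hp8 : p % 8 = 1) : Function.Injective (realQuad p) :=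
  Zsqrtd.lift_injective _ fun n hn => not_isSquare_two_p hp8 ⟨n, hn⟩

/-- The relative norm `z * conj z` from `k` to `ℚ(√(2p))` of an integer lies in `ℤ[√(2p)]`. -/
lemma norm_coords {p : ℕ} (hp : p.Prime) (hp8 : p % 8 = 1) (z : 𝓞 (kfield p)) :
    ∃ g : ℤ√(2 * p : ℤ), realQuad p g =
      ((z : kfield p) : ℂ) * (starRingEnd ℂ) ((z : kfield p) : ℂ) := by
  have hz : IsIntegral ℤ ((z : kfield p) : ℂ) :=
    (RingOfIntegers.isIntegral_coe z).map (IntermediateField.val (kfield p)).toRingHom.toIntAlgHom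
  have hz' : IsIntegral ℤ ((starRingEnd ℂ) ((z : kfield p) : ℂ)) :=
    hz.map (starRingEnd ℂ).toIntAlgHom
  have h := hz.mul hz'
  obtain ⟨a, b, c, d, habcd⟩ := mem_kfield (z : kfield p).2
  have hs := sqrt_sq p
  have key : ((z : kfield p) : ℂ) * (starRingEnd ℂ) ((z : kfield p) : ℂ) =
      ((a ^ 2 + 2 * p * b ^ 2 + c ^ 2 + 2 * p * d ^ 2 : ℚ) : ℂ) +
        ((2 * a * b + 2 * c * d : ℚ) : ℂ) * (Real.sqrt (2 * p) : ℂ) := by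
    rw [habcd]
    simp only [map_add, map_mul, Complex.conj_ofReal, Complex.conj_I, map_ratCast]
    push_cast
    generalize ((Real.sqrt (2 * p) : ℝ) : ℂ) = s at *
    linear_combination ((b : ℂ) ^ 2 + d ^ 2) * hs - (c + d * s) ^ 2 * Complex.I_sq
  rw [key] at h
  obtain ⟨m, n, hm, hn⟩ := int_coords hp hp8 _ _ h
  refine ⟨⟨m, n⟩, ?_⟩
  rw [key, ← hm, ← hn]
  simp [realQuad]

/-! ### The class of `H` is nontrivial -/

/-- If `1 + i` were a unit times a square `β²`, the relative norm `b` of `β` would satisfy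
`b² * (unit) = 2` in `ℤ[√(2p)]`, hence have norm `±2`, that is `2r² - p * s² = ±1` for some
integers `r`, `s`. -/
lemma not_principal {p : ℕ} (hp : p.Prime) (hp8 : p % 8 = 1)
    (h2p4 : (2 : ZMod p) ^ ((p - 1) / 4) = -1) (hp16 : p % 16 = 9)
    (α β u v : 𝓞 (kfield p)) (hα : ((α : kfield p) : ℂ) = 1 + Complex.I)
    (huv : u * v = 1) (hβ : β ^ 2 * u = α) : False := by
  obtain ⟨b, hb⟩ := norm_coords hp hp8 β
  obtain ⟨c, hc⟩ := norm_coords hp hp8 u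
  obtain ⟨d, hd⟩ := norm_coords hp hp8 v
  have huv' : ((u : kfield p) : ℂ) * ((v : kfield p) : ℂ) = 1 := by
    exact_mod_cast congrArg (fun t : 𝓞 (kfield p) => ((t : kfield p) : ℂ)) huv
  have hβ' : ((β : kfield p) : ℂ) ^ 2 * ((u : kfield p) : ℂ) = 1 + Complex.I := by
    rw [← hα]
    exact_mod_cast congrArg (fun t : 𝓞 (kfield p) => ((t : kfield p) : ℂ)) hβ
  have hcd : c * d = 1 := by
    apply realQuad_injective hp8
    rw [map_mul, hc, hd, map_one, mul_mul_mul_comm, ← map_mul, huv']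
    simp
  have hbc : b ^ 2 * c = 2 := by
    apply realQuad_injective hp8
    have h2 : realQuad p 2 = 2 := map_ofNat _ 2
    rw [map_mul, map_pow, hb, hc, h2, mul_pow, mul_mul_mul_comm, ← map_pow, ← map_mul, hβ']
    simp only [map_add, map_one, Complex.conj_I]
    linear_combination -Complex.I_sq
  -- the norm of the unit `c` is `±1`, and `-1` is excluded because a square times it equals `4`
  have hN1 : c.norm * d.norm = 1 := by rw [← Zsqrtd.norm_mul, hcd, Zsqrtd.norm_one]
  have hN2 : b.norm ^ 2 * c.norm = 4 := by
    have h4 : Zsqrtd.norm (2 : ℤ√(2 * p : ℤ)) = 4 := by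
      have := Zsqrtd.norm_intCast (d := 2 * p) 2
      simpa using this
    rw [pow_two, ← Zsqrtd.norm_mul, ← Zsqrtd.norm_mul, ← pow_two, hbc, h4]
  have hc1 : c.norm = 1 := by
    rcases Int.eq_one_or_neg_one_of_mul_eq_one hN1 with h | h
    · exact h
    · rw [h] at hN2; nlinarith [sq_nonneg b.norm]
  rw [hc1, mul_one] at hN2
  have hb2 : b.norm = 2 ∨ b.norm = -2 := sq_eq_sq_iff_eq_or_eq_neg.mp (by rw [hN2]; norm_num)
  rw [Zsqrtd.norm_def] at hb2
  have hev : Even b.re := by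
    by_contra h
    rw [Int.not_even_iff_odd] at h
    obtain ⟨r, hr⟩ := h
    rw [hr] at hb2
    have : 2 * (2 * r ^ 2 + 2 * r - p * b.im ^ 2) = 1 ∨
      2 * (2 * r ^ 2 + 2 * r - p * b.im ^ 2) = -3 :=
      hb2.imp (fun h => by linarith) (fun h => by linarith)
    omega
  obtain ⟨r, hr⟩ := hev
  rw [hr] at hb2
  rcases hb2 with h | h
  · exact no_sol_pos hp16 r b.im (by linarith)
  · exact no_sol_neg hp hp8 h2p4 r b.im (by linarith)

/-! ### Comparing the classes -/

/-- Squaring is injective on ideals of a Dedekind domain, so equality of the classes of `I` and `J`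
can be tested on generators of `I²` and `J²`. -/
lemma mk0_eq_of_sq {R : Type*} [CommRing R] [IsDedekindDomain R] {I J : Ideal R}
    (hI : I ∈ (Ideal R)⁰) (hJ : J ∈ (Ideal R)⁰) {α δ a b v : R} (hIα : I ^ 2 = Ideal.span {α})
    (hJδ : J ^ 2 = Ideal.span {δ}) (ha : a ≠ 0) (hb : b ≠ 0) (hv : IsUnit v)
    (h : a ^ 2 * α = v * (b ^ 2 * δ)) :
    ClassGroup.mk0 ⟨I, hI⟩ = ClassGroup.mk0 ⟨J, hJ⟩ := by
  rw [ClassGroup.mk0_eq_mk0_iff]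
  refine ⟨a, b, ha, hb, ?_⟩
  have h2 : (Ideal.span {a} * I) ^ 2 = (Ideal.span {b} * J) ^ 2 := by
    rw [mul_pow, mul_pow, hIα, hJδ, Ideal.span_singleton_pow, Ideal.span_singleton_pow,
      Ideal.span_singleton_mul_span_singleton, Ideal.span_singleton_mul_span_singleton, h,
      Ideal.span_singleton_mul_left_unit hv]
  have h3 : ∀ A B : Ideal R, A ^ 2 = B ^ 2 → A ∣ B := fun A B h =>
    (UniqueFactorizationMonoid.pow_dvd_pow_iff_dvd two_ne_zero).mp h.dvd
  exact associated_iff_eq.mp (associated_of_dvd_dvd (h3 _ _ h2) (h3 _ _ h2.symm))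

/-- For `w = (r + 1) - ri` of norm `P y²`, if `π ∣ w` with `π` of norm `P`, then `w / π` and its
conjugate are coprime with product `y²`, so `w / π` is a unit times a square. -/
lemma gaussian_factor {r y : ℤ} {P : ℤ} (hP : P ≠ 0) (hr : (r + 1) ^ 2 + r ^ 2 = P * y ^ 2)
    {π : GaussianInt} (hπ : π * star π = (P : GaussianInt)) (hdvd : π ∣ ⟨r + 1, -r⟩) :
    ∃ z u : GaussianInt, IsUnit u ∧ (⟨r + 1, -r⟩ : GaussianInt) = u * π * z ^ 2 := by
  obtain ⟨w, hw⟩ := hdvd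
  have hcop : IsCoprime (⟨r + 1, -r⟩ : GaussianInt) (star ⟨r + 1, -r⟩) := by
    -- with `w` the element at hand, `(1 + i) w - (1 - i) w̄ = 2i` and `w w̄ = 2r(r + 1) + 1`
    refine ⟨⟨0, 1⟩ * ⟨1, 1⟩ * (r * (r + 1) : ℤ),
      ⟨r + 1, -r⟩ - ⟨0, 1⟩ * ⟨1, -1⟩ * (r * (r + 1) : ℤ), ?_⟩
    ext <;> simp <;> ring
  have hN : (⟨r + 1, -r⟩ : GaussianInt) * star ⟨r + 1, -r⟩ =
      (P : GaussianInt) * (y : GaussianInt) ^ 2 := by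
    have : (P : GaussianInt) * (y : GaussianInt) ^ 2 = ((P * y ^ 2 : ℤ) : GaussianInt) := by
      push_cast; rfl
    rw [this, ← hr, ← Zsqrtd.norm_eq_mul_conj, Zsqrtd.norm_def]
    congr 1; ring
  have hcop' : IsCoprime w (star w) := by
    rw [hw, star_mul] at hcop
    exact (hcop.of_mul_left_right).of_mul_right_left
  have hsq : w * star w = (y : GaussianInt) ^ 2 := by
    have hP' : (P : GaussianInt) ≠ 0 := by exact_mod_cast hP
    apply mul_left_cancel₀ hP'
    rw [← hN, hw, star_mul, ← hπ]; ring
  obtain ⟨z, u, hu⟩ := exists_associated_pow_of_mul_eq_pow' hcop' hsq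
  exact ⟨z, u, u.isUnit, by rw [hw, ← hu]; ring⟩

lemma gaussian_prime {p : ℕ} (hp : p.Prime) {π : GaussianInt} (hπ : π.norm = p) : Prime π := by
  rw [← irreducible_iff_prime]
  refine ⟨fun h => ?_, fun a b hab => ?_⟩
  · have := Zsqrtd.norm_eq_one_iff.mpr h
    rw [hπ] at this
    exact hp.one_lt.ne' (by simpa using this)
  · have h := congrArg Int.natAbs hπ
    rw [hab, Zsqrtd.norm_mul, Int.natAbs_mul, Int.natAbs_natCast] at h
    rcases (Nat.prime_mul_iff.mp (h ▸ hp)) with hn | hn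
    · exact Or.inr (Zsqrtd.norm_eq_one_iff.mp hn.2)
    · exact Or.inl (Zsqrtd.norm_eq_one_iff.mp hn.2)

/-- For a solution of `x² - 2py² = -1`, the Gaussian integer `x + i` is `(1 + i)` times one of
`π₁`, `π₂`, up to a unit and a square: it is divisible by `1 + i`, and the quotient has norm
`p y²`. -/
lemma neg_pell_factor {p : ℕ} (hp : p.Prime) {e f x y : ℤ} (hef : (p : ℤ) = e ^ 2 + 16 * f ^ 2)
    (hxy : x ^ 2 - 2 * p * y ^ 2 = -1) : ∃ π z u : GaussianInt,
      (π = ⟨e, 4 * f⟩ ∨ π = ⟨e, -(4 * f)⟩) ∧ IsUnit u ∧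
      (⟨x, 1⟩ : GaussianInt) = ⟨1, 1⟩ * (u * π * z ^ 2) := by
  have hxodd : Odd x := by
    by_contra h
    rw [Int.not_odd_iff_even] at h
    obtain ⟨c, hc⟩ := h
    rw [hc] at hxy
    have : 2 * (p * y ^ 2 - 2 * c ^ 2) = 1 := by linarith
    omega
  obtain ⟨r, rfl⟩ := hxodd
  have hp0 : (p : ℤ) ≠ 0 := by exact_mod_cast hp.ne_zero
  have hr : (r + 1) ^ 2 + r ^ 2 = p * y ^ 2 := by linarith
  have hstar : star (⟨e, 4 * f⟩ : GaussianInt) = ⟨e, -(4 * f)⟩ := rfl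
  have hprod : (⟨e, 4 * f⟩ : GaussianInt) * star ⟨e, 4 * f⟩ = ((p : ℤ) : GaussianInt) := by
    rw [hef, ← Zsqrtd.norm_eq_mul_conj, Zsqrtd.norm_def]
    congr 1; ring
  have hprime : Prime (⟨e, 4 * f⟩ : GaussianInt) :=
    gaussian_prime hp (by rw [Zsqrtd.norm_def, hef]; ring)
  have hx : (⟨2 * r + 1, 1⟩ : GaussianInt) = ⟨1, 1⟩ * ⟨r + 1, -r⟩ := by
    ext <;> simp <;> ring
  have hdvd : (⟨e, 4 * f⟩ : GaussianInt) ∣ ⟨r + 1, -r⟩ * star ⟨r + 1, -r⟩ := by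
    refine Dvd.dvd.trans ⟨_, hprod.symm⟩ ⟨((y ^ 2 : ℤ) : GaussianInt), ?_⟩
    rw [← Int.cast_mul, ← hr, ← Zsqrtd.norm_eq_mul_conj, Zsqrtd.norm_def]
    congr 1; ring
  rcases hprime.dvd_or_dvd hdvd with h | h
  · obtain ⟨z, u, hu, hz⟩ := gaussian_factor hp0 hr hprod h
    exact ⟨_, z, u, Or.inl rfl, hu, by rw [hx, hz]⟩
  · have h' : star (⟨e, 4 * f⟩ : GaussianInt) ∣ ⟨r + 1, -r⟩ := by
      obtain ⟨w, hw⟩ := h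
      refine ⟨star w, ?_⟩
      rw [← star_star (⟨r + 1, -r⟩ : GaussianInt), hw, star_mul, mul_comm]
    obtain ⟨z, u, hu, hz⟩ := gaussian_factor hp0 hr (by rw [star_star, mul_comm]; exact hprod) h'
    exact ⟨_, z, u, Or.inr hstar, hu, by rw [hx, hz]⟩

/-- The element `i` of `𝓞 k`. -/
def Ik (p : ℕ) : 𝓞 (kfield p) :=
  ⟨⟨Complex.I, I_mem p⟩, .of_pow two_pos (by
    have : (⟨Complex.I, I_mem p⟩ : kfield p) ^ 2 = -1 := Subtype.ext Complex.I_sq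
    rw [this]; exact isIntegral_one.neg)⟩

/-- The element `√(2p)` of `𝓞 k`. -/
def Sk (p : ℕ) : 𝓞 (kfield p) :=
  ⟨⟨(Real.sqrt (2 * p) : ℂ), sqrt_mem p⟩, .of_pow two_pos (by
    have : (⟨(Real.sqrt (2 * p) : ℂ), sqrt_mem p⟩ : kfield p) ^ 2 = ((2 * p : ℕ) : kfield p) :=
      Subtype.ext (by push_cast; exact sqrt_sq p)
    rw [this]; exact isIntegral_natCast _)⟩

lemma coe_ringOfIntegers_inj {p : ℕ} {a b : 𝓞 (kfield p)} (h : ((a : kfield p) : ℂ) = ((b : kfield p) : ℂ)) :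
    a = b := RingOfIntegers.ext (Subtype.ext h)

lemma Ik_sq (p : ℕ) : Ik p * Ik p = ((-1 : ℤ) : 𝓞 (kfield p)) := by
  apply coe_ringOfIntegers_inj
  have : ((Ik p : kfield p) : ℂ) = Complex.I := rfl
  simp [this]

lemma Sk_sq (p : ℕ) : Sk p ^ 2 = 2 * p := by
  apply coe_ringOfIntegers_inj
  have : ((Sk p : kfield p) : ℂ) = (Real.sqrt (2 * p) : ℂ) := rfl
  push_cast
  rw [this, sqrt_sq]
  rfl

/-- The inclusion `ℤ[i] → 𝓞 k`. -/
def gaussK (p : ℕ) : GaussianInt →+* 𝓞 (kfield p) := Zsqrtd.lift ⟨Ik p, Ik_sq p⟩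

lemma gaussK_apply (p : ℕ) (a b : ℤ) : gaussK p ⟨a, b⟩ = a + b * Ik p := rfl

lemma coe_gaussK (p : ℕ) (a b : ℤ) :
    ((gaussK p ⟨a, b⟩ : kfield p) : ℂ) = a + b * Complex.I := by
  rw [gaussK_apply]
  have : ((Ik p : kfield p) : ℂ) = Complex.I := rfl
  simp [this]

lemma gaussK_injective (p : ℕ) : Function.Injective (gaussK p) :=
  Zsqrtd.lift_injective _ fun n hn => by nlinarith [mul_self_nonneg n]

/-- In `𝓞 k`, `2 = -i (1 + i)²`. -/
lemma two_eq (p : ℕ) : (2 : 𝓞 (kfield p)) = -Ik p * gaussK p ⟨1, 1⟩ ^ 2 := by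
  have h := Ik_sq p
  rw [gaussK_apply]
  push_cast at h ⊢
  linear_combination (2 + Ik p) * h

lemma isUnit_neg_Ik (p : ℕ) : IsUnit (-Ik p) := by
  have h := Ik_sq p
  push_cast at h
  exact IsUnit.of_mul_eq_one (Ik p) (by linear_combination -h)

/-- Let `ε = x + y√(2p)` be a unit of norm `-1`. Then `(x + i + y√(2p))² = 2 (x + i) ε`, so if
`x + i = (1 + i) u π z²` then `(1 + i) π` is a unit times a square in `k`, and the ideals with
squares `(1 + i)` and `(π)` have the same class. -/
lemma class_eq_one_add_I {p : ℕ} {x y : ℤ}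
    (hxy : x ^ 2 - 2 * p * y ^ 2 = -1) {π z u : GaussianInt} (hu : IsUnit u)
    (hfac : (⟨x, 1⟩ : GaussianInt) = ⟨1, 1⟩ * (u * π * z ^ 2)) {I J : Ideal (𝓞 (kfield p))}
    (hI : I ∈ (Ideal (𝓞 (kfield p)))⁰) (hJ : J ∈ (Ideal (𝓞 (kfield p)))⁰)
    (hIα : I ^ 2 = Ideal.span {gaussK p ⟨1, 1⟩}) (hJπ : J ^ 2 = Ideal.span {gaussK p π}) :
    ClassGroup.mk0 ⟨I, hI⟩ = ClassGroup.mk0 ⟨J, hJ⟩ := by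
  have hS := Sk_sq p
  have hII := Ik_sq p
  push_cast at hII
  have hxy' : (x : 𝓞 (kfield p)) ^ 2 - 2 * p * (y : 𝓞 (kfield p)) ^ 2 = -1 := by
    exact_mod_cast congrArg (Int.cast : ℤ → 𝓞 (kfield p)) hxy
  have hε : IsUnit ((x : 𝓞 (kfield p)) + y * Sk p) :=
    IsUnit.of_mul_eq_one (y * Sk p - x) (by linear_combination -hxy' + (y : 𝓞 (kfield p)) ^ 2 * hS)
  have hE : gaussK p ⟨x, 1⟩ = gaussK p ⟨1, 1⟩ * (gaussK p u * gaussK p π * gaussK p z ^ 2) := by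
    rw [hfac]; simp only [map_mul, map_pow]
  have hEdef : gaussK p ⟨x, 1⟩ = x + Ik p := by rw [gaussK_apply]; push_cast; ring
  have hE0 : gaussK p ⟨x, 1⟩ ≠ 0 := by
    rw [Ne, map_eq_zero_iff _ (gaussK_injective p)]
    intro h
    exact one_ne_zero (congrArg Zsqrtd.im h)
  have hsq : (gaussK p ⟨x, 1⟩ + y * Sk p) ^ 2 = 2 * gaussK p ⟨x, 1⟩ * (x + y * Sk p) := by
    rw [hEdef]
    linear_combination (y : 𝓞 (kfield p)) ^ 2 * hS - hxy' + hII
  have hb0 : gaussK p ⟨x, 1⟩ + y * Sk p ≠ 0 := by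
    intro h
    rw [h] at hsq
    exact mul_ne_zero (mul_ne_zero two_ne_zero hE0) hε.ne_zero (by rw [← hsq]; simp)
  have hz0 : gaussK p z ≠ 0 := by
    intro h
    apply hE0
    rw [hE, h]; ring
  have hψ0 : gaussK p ⟨1, 1⟩ ≠ 0 := by
    intro h
    apply hE0
    rw [hE, h]; ring
  refine mk0_eq_of_sq hI hJ hIα hJπ hb0 (mul_ne_zero (pow_ne_zero 2 hψ0) hz0)
    (((isUnit_neg_Ik p).mul (hu.map (gaussK p))).mul hε) ?_
  rw [hsq, hE]
  linear_combination (gaussK p ⟨1, 1⟩ ^ 2 * gaussK p u * gaussK p π * gaussK p z ^ 2 *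
    (x + y * Sk p)) * two_eq p

theorem statement_0 (p : ℕ) (hp : p.Prime) (hp8 : p % 8 = 1)
    -- (2/p)₄ = −1 :
    (h2p4 : (2 : ZMod p) ^ ((p - 1) / 4) = -1)
    -- (p/2)₄ = −1 :
    (hp24 : (-1 : ℤ) ^ ((p - 1) / 8) = -1)
    (e f : ℤ) (hef : (p : ℤ) = e ^ 2 + 16 * f ^ 2)
    (H H₁ H₂ : Ideal (𝓞 (kfield p)))
    (hHpr : H.IsPrime) (hH₁pr : H₁.IsPrime) (hH₂pr : H₂.IsPrime)
    (α α₁ α₂ : 𝓞 (kfield p))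
    (hα : ((α : kfield p) : ℂ) = 1 + Complex.I)
    (hα₁ : ((α₁ : kfield p) : ℂ) = (e : ℂ) + 4 * (f : ℂ) * Complex.I)
    (hα₂ : ((α₂ : kfield p) : ℂ) = (e : ℂ) - 4 * (f : ℂ) * Complex.I)
    (hH : H ^ 2 = Ideal.span {α}) (hH₁ : H₁ ^ 2 = Ideal.span {α₁})
    (hH₂ : H₂ ^ 2 = Ideal.span {α₂})
    (h0 : H ∈ (Ideal (𝓞 (kfield p)))⁰) (h1 : H₁ ∈ (Ideal (𝓞 (kfield p)))⁰)
    (h2 : H₂ ∈ (Ideal (𝓞 (kfield p)))⁰) :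
    ClassGroup.mk0 ⟨H, h0⟩ = ClassGroup.mk0 ⟨H₁, h1⟩ ∧
    ClassGroup.mk0 ⟨H, h0⟩ = ClassGroup.mk0 ⟨H₂, h2⟩ ∧
    orderOf (ClassGroup.mk0 ⟨H, h0⟩) = 2 := by
  have hp16 : p % 16 = 9 := by
    have hodd : Odd ((p - 1) / 8) := by
      by_contra h
      rw [Nat.not_odd_iff_even] at h
      rw [h.neg_one_pow] at hp24
      norm_num at hp24
    rw [Nat.odd_iff] at hodd
    have := hp.one_lt
    omega
  obtain ⟨x, y, hxy⟩ := exists_neg_pell hp hp8 h2p4 hp16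
  obtain ⟨π, z, u, hπ, hu, hfac⟩ := neg_pell_factor hp hef hxy
  have hα' : α = gaussK p ⟨1, 1⟩ := coe_ringOfIntegers_inj (by rw [hα, coe_gaussK]; push_cast; ring)
  have hα₁' : α₁ = gaussK p ⟨e, 4 * f⟩ := coe_ringOfIntegers_inj (by rw [hα₁, coe_gaussK]; push_cast; ring)
  have hα₂' : α₂ = gaussK p ⟨e, -(4 * f)⟩ := coe_ringOfIntegers_inj (by rw [hα₂, coe_gaussK]; push_cast; ring)
  have hα₁₂ : α₁ * α₂ = p := by
    have h := congrArg (Int.cast : ℤ → 𝓞 (kfield p)) hef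
    have hII := Ik_sq p
    push_cast at h hII
    rw [hα₁', hα₂', gaussK_apply, gaussK_apply, h]
    push_cast
    linear_combination -16 * (f : 𝓞 (kfield p)) ^ 2 * hII
  have hp0 : (p : 𝓞 (kfield p)) ≠ 0 := by exact_mod_cast hp.ne_zero
  have h20 := two_eq p
  have hα0 : α ≠ 0 := by
    rintro rfl
    rw [← hα'] at h20
    simp at h20
  have hα₂0 : α₂ ≠ 0 := by
    rintro rfl
    exact hp0 (by rw [← hα₁₂, mul_zero])
  have hS0 : Sk p ≠ 0 := by
    intro h
    have := Sk_sq p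
    rw [h] at this
    exact mul_ne_zero two_ne_zero hp0 (by rw [← this]; simp)
  -- `(√(2p)) H₂ = ((1 + i) π₂) H₁`
  have h12 : ClassGroup.mk0 ⟨H₂, h2⟩ = ClassGroup.mk0 ⟨H₁, h1⟩ := by
    refine mk0_eq_of_sq h2 h1 hH₂ hH₁ hS0 (mul_ne_zero hα0 hα₂0) (isUnit_neg_Ik p) ?_
    rw [Sk_sq, ← hα₁₂, h20, ← hα']
    ring
  have hH1 : ClassGroup.mk0 ⟨H, h0⟩ = ClassGroup.mk0 ⟨H₁, h1⟩ := by
    rw [hα'] at hH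
    rcases hπ with rfl | rfl
    · exact class_eq_one_add_I hxy hu hfac h0 h1 hH (by rw [hH₁, hα₁'])
    · rw [← h12]
      exact class_eq_one_add_I hxy hu hfac h0 h2 hH (by rw [hH₂, hα₂'])
  refine ⟨hH1, hH1.trans h12.symm, orderOf_eq_prime ?_ ?_⟩
  · rw [← map_pow]
    have : (⟨H, h0⟩ : (Ideal (𝓞 (kfield p)))⁰) ^ 2 = ⟨H ^ 2, pow_mem h0 2⟩ := rfl
    rw [this, ClassGroup.mk0_eq_one_iff, hH]
    exact ⟨α, rfl⟩
  · rw [Ne, ClassGroup.mk0_eq_one_iff]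
    rintro ⟨β, hβ⟩
    have hβ' : H = Ideal.span {β} := hβ
    rw [hβ', Ideal.span_singleton_pow, Ideal.span_singleton_eq_span_singleton] at hH
    obtain ⟨v, hv⟩ := hH
    exact not_principal hp hp8 h2p4 hp16 α β v ↑v⁻¹ hα (by simp) hv
end
end

section
/- Let p be a prime with p ≡ 1 (mod 8), F = ℚ(√p, √2), and let ε₁, ε₂, ε₃ denote the fundamental units of ℚ(√p), ℚ(√2), ℚ(√(2p)) respectively. Then: (i) there exists a unit u ∈ O_F^× with u² = ε₁ε₂ε₃ such that {u, ε₂, ε₃} is a fundamental system of units of F, if and only if ε₃ has norm −1; (ii) there exists a unit u ∈ O_F^× with u² = ε₃ such that {ε₁, ε₂, u} is a fundamental system of units of F, if and only if ε₃ has norm +1. -/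
/-!
Let `F = ℚ(√2, √p)` and let `σ`, `τ` be its conjugations fixing `√p` and `√2` respectively, so that
`ℚ(√p)`, `ℚ(√2)`, `ℚ(√(2p))` are the fixed fields of `σ`, `τ`, `στ`. The argument is Kubota's method
for units of biquadratic fields.

* `ε₁` and `ε₂` have norm `-1` (`norm₁`, `norm₂`): a unit `x + y√p > 1` of norm `1` is of the form
  `(a√d + b√d')²` with `dd' = p`, hence a square in `ℚ(√p)`, and is not fundamental; `1 + √2` has
  norm `-1`.
* For a unit `t` of `F`, the identity `t² = (t · σt)(t · τt)(σt · τt)⁻¹` shows that `t²` is a product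
  `ε₁^a ε₂^b ε₃^c` (`sq_eq`). Relative norms of `t` to `ℚ(√p)` and `ℚ(√2)` are real, so their squares
  are positive; with the norms of the `εᵢ` this restricts the parities of `a`, `b`, `c`
  (`parityσ`, `parityτ`). If `N(ε₃) = -1`, then `a ≡ b ≡ c (mod 2)`; if `N(ε₃) = 1`, then `a` and `b`
  are even. In particular `ε₁ε₂ε₃` can be a square only in the first case and `ε₃` only in the
  second.
* If `N(ε₃) = 1`, then `ε₃ = (a√d + b√d')²` with `dd' = 2p`, a square in `F` (`sqrt₃`).
* If `N(ε₃) = -1`, then `ε₁ε₂ε₃` is a square in `F` (`sqrt_prod`). The element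
  `k = ε₁ε₂ε₃ + ε₁ + ε₂ - ε₃` is positive, and each conjugate of `k` is a unit multiple of `k`, in
  such a way that `k² / ε₁ε₂ε₃` is fixed by `σ` and `τ`, so that it is a positive integer `f²s` with
  `s` squarefree. Primes dividing `s` ramify in `F`, so `s` divides `2p` (`prime_dvd`) and is a
  square in `F`.

Since the square roots in the last two items exist exactly when the parities allow them, extracting
a square root from `t² = ε₁^a ε₂^b ε₃^c` gives the two fundamental systems (`part_i`, `part_ii`).

These steps are carried out in an abstract field `L` with the data `BiqData`; the last part of the
file supplies this data for the subfield `Fbiq p` of `ℂ`.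
-/

/- STATEMENT 4: Let p ≡ 1 (mod 8) be prime, F = ℚ(√p, √2), and ε₁, ε₂, ε₃ the fundamental
units of ℚ(√p), ℚ(√2), ℚ(√(2p)). Then:
(i) there is a unit u of F with u² = ε₁ε₂ε₃ and {u, ε₂, ε₃} a fundamental system of units
of F iff N(ε₃) = −1;
(ii) there is a unit u of F with u² = ε₃ and {ε₁, ε₂, u} a fundamental system of units
of F iff N(ε₃) = +1. -/

open Complex NumberField IntermediateField nonZeroDivisors

noncomputable section

/-- The real quadratic field ℚ(√n) as a subfield of ℂ. -/
def Qsqrt (n : ℕ) : IntermediateField ℚ ℂ := ℚ⟮(Real.sqrt n : ℂ)⟯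

/-- The biquadratic field F = ℚ(√p, √2) as a subfield of ℂ. -/
def Fbiq (p : ℕ) : IntermediateField ℚ ℂ := ℚ⟮(Real.sqrt p : ℂ), (Real.sqrt 2 : ℂ)⟯

/-- `ε` is the fundamental unit of a real quadratic field `Q` (a subfield of ℂ):
it is a real number > 1 and generates the unit group modulo ±1. -/
def IsFundamentalUnit {Q : IntermediateField ℚ ℂ} (ε : (𝓞 Q)ˣ) : Prop :=
  (∃ r : ℝ, 1 < r ∧ (((ε : 𝓞 Q) : Q) : ℂ) = (r : ℂ)) ∧
  ∀ u : (𝓞 Q)ˣ, ∃ n : ℤ, u = ε ^ n ∨ u = -ε ^ n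

/-- `{u, v, w}` is a fundamental system of units of the (unit rank 3) field `F`:
together with −1 they generate the full unit group. -/
def IsFundamentalSystem {F : IntermediateField ℚ ℂ} (u v w : (𝓞 F)ˣ) : Prop :=
  ∀ t : (𝓞 F)ˣ, ∃ a b c : ℤ, t = u ^ a * v ^ b * w ^ c ∨ t = -(u ^ a * v ^ b * w ^ c)

/-! ### Pell equations -/

/-- Since `m` and `m + 1` are coprime, each is a square up to a divisor of `n`. -/
theorem consecutive_split {m n z : ℕ} (h : m * (m + 1) = n * z ^ 2) (hn : 0 < n) :
    ∃ d d' a b : ℕ, d * d' = n ∧ m = d * a ^ 2 ∧ m + 1 = d' * b ^ 2 ∧ z = a * b := by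
  obtain ⟨m', n', hco, hm, hn'⟩ := Nat.exists_coprime m n
  set d := m.gcd n with hd
  have hd0 : 0 < d := Nat.gcd_pos_of_pos_right _ hn
  have h1 : m' * (m + 1) = n' * z ^ 2 := by
    apply Nat.eq_of_mul_eq_mul_left hd0
    calc d * (m' * (m + 1)) = (m' * d) * (m + 1) := by ring
      _ = (n' * d) * z ^ 2 := by rw [← hm, ← hn', h]
      _ = _ := by ring
  have hnpos : 0 < n' := by
    rcases Nat.eq_zero_or_pos n' with h0 | h0
    · simp [h0] at hn'; omega
    · exact h0
  obtain ⟨k, hk⟩ : n' ∣ m + 1 := hco.symm.dvd_of_dvd_mul_left ⟨z ^ 2, h1⟩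
  have h2 : m' * k = z ^ 2 := by
    apply Nat.eq_of_mul_eq_mul_left hnpos
    rw [← h1, hk]; ring
  have hco2 : Nat.Coprime m' k := by
    have : Nat.Coprime m (m + 1) := by simp
    rw [hk] at this
    exact (this.coprime_dvd_left ⟨d, hm⟩).coprime_dvd_right ⟨n', by ring⟩
  obtain ⟨a, ha⟩ := exists_eq_pow_of_mul_eq_pow (Nat.isUnit_iff.2 hco2) h2
  obtain ⟨b, hb⟩ := exists_eq_pow_of_mul_eq_pow (a := k) (b := m') (c := z) (k := 2)
    (Nat.isUnit_iff.2 hco2.symm) (by rw [mul_comm, h2])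
  refine ⟨d, n', a, b, by rw [mul_comm]; exact hn'.symm, by rw [← ha, mul_comm]; exact hm,
    by rw [hk, hb], ?_⟩
  have : z ^ 2 = (a * b) ^ 2 := by rw [← h2, ha, hb]; ring
  exact Nat.pow_left_injective (n := 2) (by norm_num) this

/-- A solution of `x² - ny² = 1` with `y` even satisfies
`x + y√n = (a√d + b√d')²` for some factorization `n = dd'`. -/
theorem pell_split {n : ℕ} (hn : 0 < n) {x y : ℤ} (hx : 0 < x) (hy : Even y)
    (h : x ^ 2 - n * y ^ 2 = 1) :
    ∃ (d d' : ℕ) (a b : ℤ), d * d' = n ∧ x = d * a ^ 2 + d' * b ^ 2 ∧ y = 2 * a * b := by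
  obtain ⟨w, hw⟩ := hy
  have hxo : ¬ Even x := by
    rintro ⟨v, hv⟩
    have : 2 * (2 * v ^ 2 - 2 * n * w ^ 2) = 1 := by rw [← h, hv, hw]; ring
    omega
  obtain ⟨m, hm⟩ := Int.not_even_iff_odd.1 hxo
  lift m to ℕ using by omega
  have h1 : m * (m + 1) = n * w.natAbs ^ 2 := by
    zify
    rw [sq_abs]
    have : (2 * (m : ℤ) + 1) ^ 2 - n * (w + w) ^ 2 = 1 := by rw [← hm, ← hw, h]
    linarith
  obtain ⟨d, d', a, b, hdd, ha, hb, hz⟩ := consecutive_split h1 hn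
  have hx' : x = d * (a : ℤ) ^ 2 + d' * (b : ℤ) ^ 2 := by
    have ha' : (m : ℤ) = d * (a : ℤ) ^ 2 := by exact_mod_cast ha
    have hb' : (m : ℤ) + 1 = d' * (b : ℤ) ^ 2 := by exact_mod_cast hb
    rw [hm, ← hb', ← ha']; ring
  rcases Int.natAbs_eq w with h2 | h2
  · refine ⟨d, d', a, b, hdd, hx', ?_⟩
    rw [hw, h2, hz]; push_cast; ring
  · refine ⟨d, d', -a, b, hdd, by rw [hx']; ring, ?_⟩
    rw [hw, h2, hz]; push_cast; ring

theorem rat_int_of_sq {n : ℕ} (hn : Squarefree n) {z : ℚ} {m : ℤ} (h : n * z ^ 2 = m) :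
    ∃ k : ℤ, z = k := by
  have h1 : (n : ℤ) * z.num ^ 2 = m * (z.den : ℤ) ^ 2 := by
    have hd : (z.den : ℚ) ≠ 0 := by exact_mod_cast z.den_nz
    have : (n : ℚ) * z.num ^ 2 = m * (z.den : ℚ) ^ 2 := by
      rw [← h]
      nth_rw 2 [← Rat.num_div_den z]
      field_simp
    exact_mod_cast this
  have h2 : z.den ^ 2 ∣ n * z.num.natAbs ^ 2 := by
    have : ((z.den : ℤ) ^ 2) ∣ n * z.num ^ 2 := ⟨m, by rw [h1]; ring⟩
    have := Int.natAbs_dvd_natAbs.2 this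
    simpa [Int.natAbs_mul, Int.natAbs_pow] using this
  have h3 : z.den ^ 2 ∣ n := by
    refine Nat.Coprime.dvd_of_dvd_mul_right ?_ h2
    exact Nat.Coprime.pow _ _ z.reduced.symm
  have h4 : z.den = 1 := Nat.isUnit_iff.1 (hn _ (by rw [← sq]; exact h3))
  exact ⟨z.num, ((Rat.den_eq_one_iff z).1 h4).symm⟩

/-- For `p ≡ 1 (mod 8)`, a unit of `ℚ(√p)` has integer, and not only half-integer, coordinates
in the basis `1, √p`; the hypothesis `hX` says that its trace is an integer. If its norm is `1`,
reduction modulo `4` shows moreover that the coefficient of `√p` is even. -/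
theorem unit_coords_p {p : ℕ} (hp : p.Prime) (hp8 : p % 8 = 1) {x y : ℚ} {X s : ℤ} (hX : 2 * x = X)
    (hs : s = 1 ∨ s = -1) (h : x ^ 2 - p * y ^ 2 = s) :
    ∃ x' y' : ℤ, x = x' ∧ y = y' ∧ (s = 1 → Even y') := by
  obtain ⟨Y, hY⟩ : ∃ Y : ℤ, 2 * y = Y := by
    apply rat_int_of_sq (n := p) (m := X ^ 2 - 4 * s) hp.prime.squarefree
    push_cast; rw [← hX, ← h]; ring
  have h1 : X ^ 2 - p * Y ^ 2 = 4 * s := by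
    have : (X : ℚ) ^ 2 - p * Y ^ 2 = 4 * s := by rw [← hX, ← hY, ← h]; ring
    exact_mod_cast this
  obtain ⟨k, hk⟩ : ∃ k, p = 8 * k + 1 := ⟨p / 8, by omega⟩
  rw [hk] at h1; push_cast at h1
  rcases Int.even_or_odd' X with ⟨u, hu | hu⟩ <;> rcases Int.even_or_odd' Y with ⟨v, hv | hv⟩
  · refine ⟨u, v, ?_, ?_, ?_⟩
    · rw [hu] at hX; push_cast at hX; linarith
    · rw [hv] at hY; push_cast at hY; linarith
    · rintro rfl
      by_contra hvo
      obtain ⟨w, hw⟩ := Int.not_even_iff_odd.1 hvo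
      rw [hu, hv, hw] at h1
      rcases Int.even_or_odd' u with ⟨t, ht | ht⟩ <;> rw [ht] at h1 <;> ring_nf at h1 <;> omega
  · rw [hu, hv] at h1; ring_nf at h1; omega
  · rw [hu, hv] at h1; ring_nf at h1; omega
  · rw [hu, hv] at h1
    have e1 := Int.even_mul_succ_self u
    have e2 := Int.even_mul_succ_self v
    obtain ⟨c, hc⟩ := e1
    obtain ⟨d, hd⟩ := e2
    have : 8 * c - 8 * d - 8 * k * (2 * v + 1) ^ 2  = 4 * s := by
      linear_combination h1 - 4 * hc + 4 * hd
    rcases hs with rfl | rfl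
    · generalize k * (2 * v + 1) ^ 2 = q at *; grind
    · grind

/-- The analogue of `unit_coords_p` for `ℚ(√(2p))`. -/
theorem unit_coords_2p {p : ℕ} (hp : p.Prime) (hp8 : p % 8 = 1) {x y : ℚ} {X s : ℤ} (hX : 2 * x = X)
    (h : x ^ 2 - (2 * p : ℕ) * y ^ 2 = s) :
    ∃ x' y' : ℤ, x = x' ∧ y = y' ∧ (s = 1 → Even y') := by
  have hsf : Squarefree (2 * p) := by
    rw [Nat.squarefree_mul_iff]
    exact ⟨(Nat.coprime_primes Nat.prime_two hp).2 (by omega), Nat.prime_two.prime.squarefree,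
      hp.prime.squarefree⟩
  obtain ⟨Y, hY⟩ : ∃ Y : ℤ, 2 * y = Y := by
    apply rat_int_of_sq (n := 2 * p) (m := X ^ 2 - 4 * s) hsf
    rw [Int.cast_sub, Int.cast_mul, Int.cast_pow, ← hX, ← h]; push_cast; ring
  have h1 : X ^ 2 - 2 * p * Y ^ 2 = 4 * s := by
    have : (X : ℚ) ^ 2 - 2 * p * Y ^ 2 = 4 * s := by rw [← hX, ← hY, ← h]; push_cast; ring
    exact_mod_cast this
  obtain ⟨k, hk⟩ : ∃ k, p = 8 * k + 1 := ⟨p / 8, by omega⟩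
  rw [hk] at h1; push_cast at h1
  rcases Int.even_or_odd' X with ⟨u, hu | hu⟩ <;> rcases Int.even_or_odd' Y with ⟨v, hv | hv⟩
  · refine ⟨u, v, ?_, ?_, ?_⟩
    · rw [hu] at hX; push_cast at hX; linarith
    · rw [hv] at hY; push_cast at hY; linarith
    · rintro rfl
      by_contra hvo
      obtain ⟨w, hw⟩ := Int.not_even_iff_odd.1 hvo
      rw [hu, hv, hw] at h1
      rcases Int.even_or_odd' u with ⟨t, ht | ht⟩ <;> rw [ht] at h1 <;> ring_nf at h1 <;> omega
  · rw [hu, hv] at h1; ring_nf at h1; omega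
  · rw [hu, hv] at h1; ring_nf at h1; omega
  · rw [hu, hv] at h1; ring_nf at h1; omega

/-! ### Biquadratic fields -/

/-- The element `x` of a field is a unit of its ring of integers. -/
def IsU {L : Type*} [Field L] (x : L) : Prop :=
  x ≠ 0 ∧ IsIntegral ℤ x ∧ IsIntegral ℤ x⁻¹

/-- A presentation of a field `L` as the real biquadratic field `ℚ(√2, √p)`: square roots `α` of `2`
and `β` of `p` that span `L` over `ℚ` together with `1` and `αβ`, the two conjugations `σ`
(changing the sign of `α`) and `τ` (changing the sign of `β`), and a real embedding `φ`. -/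
structure BiqData (p : ℕ) (L : Type*) [Field L] where
  α : L
  β : L
  σ : L →+* L
  τ : L →+* L
  φ : L →+* ℝ
  hα : α ^ 2 = 2
  hβ : β ^ 2 = p
  σα : σ α = -α
  σβ : σ β = β
  τα : τ α = α
  τβ : τ β = -β
  span : ∀ x, ∃ a b c d : ℚ, x = a + b * α + c * β + d * (α * β)

namespace BiqData

variable {p : ℕ} {L : Type*} [Field L]

theorem isU_of_sq {w e : L} (he : IsU e) (h : w ^ 2 = e) : IsU w := by
  refine ⟨?_, ?_, ?_⟩
  · rintro rfl
    exact he.1 (by rw [← h]; simp)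
  · exact IsIntegral.of_pow (n := 2) (by norm_num) (by rw [h]; exact he.2.1)
  · exact IsIntegral.of_pow (n := 2) (by norm_num) (by rw [inv_pow, h]; exact he.2.2)

theorem isU_mul {x y : L} (hx : IsU x) (hy : IsU y) : IsU (x * y) :=
  ⟨mul_ne_zero hx.1 hy.1, hx.2.1.mul hy.2.1, by rw [mul_inv]; exact hx.2.2.mul hy.2.2⟩

theorem isU_map {x : L} (f : L →+* L) (hx : IsU x) : IsU (f x) :=
  ⟨(map_ne_zero f).2 hx.1, map_isIntegral_int f hx.2.1,
    by rw [← map_inv₀]; exact map_isIntegral_int f hx.2.2⟩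

theorem even_of_pow {b : ℤ} (h : (-1 : L) ^ b ≠ -1) : Even b := by
  by_contra h1
  exact h (Int.not_even_iff_odd.1 h1).neg_one_zpow

theorem exists_int [CharZero L] {a : ℚ} (h : IsIntegral ℤ (a : L)) : ∃ n : ℤ, a = n := by
  have h1 : IsIntegral ℤ (algebraMap ℚ L a) := by simpa using h
  rw [isIntegral_algebraMap_iff (algebraMap ℚ L).injective] at h1
  obtain ⟨n, hn⟩ := IsIntegrallyClosed.isIntegral_iff.1 h1
  exact ⟨n, by simpa using hn.symm⟩

theorem charZero (D : BiqData p L) : CharZero L := ⟨fun a b h => by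
  have h1 : D.φ a = D.φ b := by rw [h]
  simpa using h1⟩

variable (D : BiqData p L)

theorem σσ (x : L) : D.σ (D.σ x) = x := by
  obtain ⟨a, b, c, d, rfl⟩ := D.span x
  simp [D.σα, D.σβ]

theorem ττ (x : L) : D.τ (D.τ x) = x := by
  obtain ⟨a, b, c, d, rfl⟩ := D.span x
  simp [D.τα, D.τβ]

theorem στ (x : L) : D.σ (D.τ x) = D.τ (D.σ x) := by
  obtain ⟨a, b, c, d, rfl⟩ := D.span x
  simp [D.τα, D.τβ, D.σα, D.σβ]

theorem fixσ {x : L} (h : D.σ x = x) : ∃ a c : ℚ, x = a + c * D.β := by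
  have := D.charZero
  obtain ⟨a, b, c, d, hx⟩ := D.span x
  refine ⟨a, c, ?_⟩
  have h2 : D.σ x = a - b * D.α + c * D.β - d * (D.α * D.β) := by
    rw [hx]; simp [D.σα, D.σβ]; ring
  linear_combination (hx + h2 - h) / 2

theorem fixτ {x : L} (h : D.τ x = x) : ∃ a c : ℚ, x = a + c * D.α := by
  have := D.charZero
  obtain ⟨a, b, c, d, hx⟩ := D.span x
  refine ⟨a, b, ?_⟩
  have h2 : D.τ x = a + b * D.α - c * D.β - d * (D.α * D.β) := by
    rw [hx]; simp [D.τα, D.τβ]; ring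
  linear_combination (hx + h2 - h) / 2

theorem fixστ {x : L} (h : D.σ (D.τ x) = x) : ∃ a c : ℚ, x = a + c * (D.α * D.β) := by
  have := D.charZero
  obtain ⟨a, b, c, d, hx⟩ := D.span x
  refine ⟨a, d, ?_⟩
  have h2 : D.σ (D.τ x) = a - b * D.α - c * D.β + d * (D.α * D.β) := by
    rw [hx]; simp [D.τα, D.τβ, D.σα, D.σβ]; ring
  linear_combination (hx + h2 - h) / 2

theorem fix_rat {x : L} (h : D.σ x = x) (h' : D.τ x = x) : ∃ a : ℚ, x = a := by
  have := D.charZero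
  obtain ⟨a, c, hx⟩ := D.fixσ h
  refine ⟨a, ?_⟩
  have h2 : D.τ x = a - c * D.β := by
    rw [hx]; simp [D.τβ]; ring
  linear_combination (hx + h2 - h') / 2

theorem fix_int {x : L} (hi : IsIntegral ℤ x) (h : D.σ x = x) (h' : D.τ x = x) :
    ∃ a : ℤ, x = a := by
  have := D.charZero
  obtain ⟨a, rfl⟩ := D.fix_rat h h'
  obtain ⟨n, rfl⟩ := exists_int hi
  exact ⟨n, by simp⟩

theorem fix_unit {x : L} (hi : IsU x) (h : D.σ x = x) (h' : D.τ x = x) :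
    x = 1 ∨ x = -1 := by
  have := D.charZero
  obtain ⟨a, ha⟩ := D.fix_int hi.2.1 h h'
  obtain ⟨b, hb⟩ := D.fix_int hi.2.2 (by rw [map_inv₀, h]) (by rw [map_inv₀, h'])
  have h1 : a * b = 1 := by
    have : (a : L) * b = 1 := by rw [← ha, ← hb, mul_inv_cancel₀ hi.1]
    exact_mod_cast this
  rcases Int.isUnit_iff.1 (IsUnit.of_mul_eq_one _ h1) with h2 | h2
  · left; rw [ha, h2]; simp
  · right; rw [ha, h2]; simp

theorem sq_ne_neg_sq (D : BiqData p L) {x y : L} (hx : x ≠ 0) (h : x ^ 2 = -y ^ 2) : False := by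
  have h1 : D.φ x ^ 2 = - D.φ y ^ 2 := by rw [← map_pow, h]; simp
  have : D.φ x ≠ 0 := (map_ne_zero D.φ).2 hx
  have : 0 < D.φ x ^ 2 := by positivity
  nlinarith [sq_nonneg (D.φ y)]

/-- A unit which generates a group of units up to sign is not the square of an element of
that group. -/
theorem not_sq {e w : L} (he : 1 < D.φ e) (hw : ∃ n : ℤ, w = e ^ n ∨ w = -e ^ n)
    (h : w ^ 2 = e) : False := by
  obtain ⟨n, hn⟩ := hw
  have h1 : e ^ (2 * n) = e ^ (1 : ℤ) := by
    rw [zpow_one, mul_comm, zpow_mul]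
    rcases hn with hn | hn <;> rw [hn] at h <;> simpa using h
  have h2 : D.φ e ^ (2 * n) = D.φ e ^ (1 : ℤ) := by rw [← map_zpow₀, h1, map_zpow₀]
  have := zpow_right_injective₀ (by linarith) (ne_of_gt he) h2
  omega

/-- The arithmetic of a unit `e = x + yρ > 1` of relative norm `1`, where `ρ² = n` and `f` is a
conjugation with `f ρ = -ρ`. -/
theorem norm_one_coords (f : L →+* L) {e ρ : L} {n : ℕ} {x y : ℚ} (hρ : ρ ^ 2 = n)
    (hf : f ρ = -ρ) (hx : e = x + y * ρ) (he : IsU e) (hpos : 1 < D.φ e) (h : e * f e = 1) :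
    (∃ X : ℤ, 2 * x = X) ∧ x ^ 2 - n * y ^ 2 = (1 : ℤ) ∧ 0 < x := by
  have := D.charZero
  have hfe : f e = x - y * ρ := by rw [hx]; simp [hf]; ring
  refine ⟨?_, ?_, ?_⟩
  · apply exists_int (L := L)
    have h1 : ((2 * x : ℚ) : L) = e + f e := by
      push_cast
      linear_combination -hx - hfe
    rw [h1]
    exact he.2.1.add (map_isIntegral_int f he.2.1)
  · have : ((x ^ 2 - n * y ^ 2 : ℚ) : L) = (1 : ℚ) := by
      push_cast
      rw [← h, hfe, hx]
      linear_combination (y : L) ^ 2 * hρ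
    have := Rat.cast_injective this
    simpa using this
  · have h1 : D.φ e * D.φ (f e) = 1 := by rw [← map_mul, h, map_one]
    have h2 : 0 < D.φ (f e) := by
      by_contra h3
      nlinarith
    have h3 : D.φ e + D.φ (f e) = 2 * (x : ℝ) := by
      rw [← map_add, hfe, hx]; simp; ring
    have : (0 : ℝ) < x := by linarith
    exact_mod_cast this

/-! ### Norms of the fundamental units -/

/-- `e₁`, `e₂`, `e₃` are the fundamental units of the three quadratic subfields, which are the fixed
fields of `σ`, `τ` and `στ`, that is `ℚ(√p)`, `ℚ(√2)` and `ℚ(√(2p))`. -/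
structure Fund (D : BiqData p L) (e₁ e₂ e₃ : L) : Prop where
  u₁ : IsU e₁
  u₂ : IsU e₂
  u₃ : IsU e₃
  pos₁ : 1 < D.φ e₁
  pos₂ : 1 < D.φ e₂
  pos₃ : 1 < D.φ e₃
  fix₁ : D.σ e₁ = e₁
  fix₂ : D.τ e₂ = e₂
  fix₃ : D.σ (D.τ e₃) = e₃
  gen₁ : ∀ x, IsU x → D.σ x = x → ∃ n : ℤ, x = e₁ ^ n ∨ x = -e₁ ^ n
  gen₂ : ∀ x, IsU x → D.τ x = x → ∃ n : ℤ, x = e₂ ^ n ∨ x = -e₂ ^ n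
  gen₃ : ∀ x, IsU x → D.σ (D.τ x) = x → ∃ n : ℤ, x = e₃ ^ n ∨ x = -e₃ ^ n

namespace Fund

variable {D} {e₁ e₂ e₃ : L}

/-- `ε₁` has norm `-1`: otherwise the splitting of the Pell equation, whose only factorizations of
`p` are trivial, would make `ε₁` a square in `ℚ(√p)`. -/
theorem norm₁ (H : D.Fund e₁ e₂ e₃) (hp : p.Prime) (hp8 : p % 8 = 1) : e₁ * D.τ e₁ = -1 := by
  have := D.charZero
  rcases D.fix_unit (isU_mul H.u₁ (isU_map D.τ H.u₁)) (by simp [D.στ, H.fix₁])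
    (by rw [map_mul, D.ττ, mul_comm]) with h | h
  swap
  · exact h
  exfalso
  obtain ⟨x, y, hx⟩ := D.fixσ H.fix₁
  obtain ⟨⟨X, hX⟩, hn, hx0⟩ := D.norm_one_coords D.τ D.hβ D.τβ hx H.u₁ H.pos₁ h
  obtain ⟨x', y', rfl, rfl, hy⟩ := unit_coords_p hp hp8 hX (Or.inl rfl) hn
  obtain ⟨d, d', a, b, hdd, hxx, hyy⟩ := pell_split (n := p) hp.pos (by exact_mod_cast hx0) (hy rfl)
    (by exact_mod_cast hn)
  have hxL : (((x' : ℚ)) : L) = d * (a : L) ^ 2 + d' * (b : L) ^ 2 := by rw [hxx]; push_cast; ring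
  have hyL : (((y' : ℚ)) : L) = 2 * a * b := by rw [hyy]; push_cast; ring
  rcases (Nat.dvd_prime hp).1 ⟨d', hdd.symm⟩ with h1 | h1
  · rw [h1, one_mul] at hdd
    have hw : ((a : L) + b * D.β) ^ 2 = e₁ := by
      rw [hx, hxL, hyL, h1, hdd, ← D.hβ]; push_cast; ring
    refine D.not_sq H.pos₁ (H.gen₁ _ (isU_of_sq H.u₁ hw) ?_) hw
    simp [D.σβ]
  · have h2 : d' = 1 := by
      rw [h1] at hdd; exact Nat.eq_of_mul_eq_mul_left hp.pos (by rw [hdd, mul_one])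
    have hw : ((a : L) * D.β + b) ^ 2 = e₁ := by
      rw [hx, hxL, hyL, h1, h2, ← D.hβ]; push_cast; ring
    refine D.not_sq H.pos₁ (H.gen₁ _ (isU_of_sq H.u₁ hw) ?_) hw
    simp [D.σβ]

/-- `ε₂` has norm `-1`, because the unit `1 + √2` does. -/
theorem norm₂ (H : D.Fund e₁ e₂ e₃) : e₂ * D.σ e₂ = -1 := by
  have := D.charZero
  rcases D.fix_unit (isU_mul H.u₂ (isU_map D.σ H.u₂)) (by rw [map_mul, D.σσ, mul_comm])
    (by simp [← D.στ, H.fix₂]) with h | h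
  swap
  · exact h
  exfalso
  have hi : IsIntegral ℤ D.α := IsIntegral.of_pow (n := 2) (by norm_num) (by
    rw [D.hα]; simpa using isIntegral_algebraMap (R := ℤ) (A := L) (x := 2))
  have h1 : (1 + D.α) * (D.α - 1) = 1 := by linear_combination D.hα
  have hU : IsU (1 + D.α) := by
    refine ⟨left_ne_zero_of_mul_eq_one h1, isIntegral_one.add hi, ?_⟩
    rw [inv_eq_of_mul_eq_one_right h1]
    exact hi.sub isIntegral_one
  have h3 : (1 + D.α) * D.σ (1 + D.α) = -1 := by
    simp [D.σα]; linear_combination -D.hα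
  obtain ⟨n, hn | hn⟩ := H.gen₂ _ hU (by simp [D.τα])
  · rw [hn, map_zpow₀, ← mul_zpow, h, one_zpow] at h3
    norm_num at h3
  · rw [hn, map_neg, map_zpow₀, neg_mul_neg, ← mul_zpow, h, one_zpow] at h3
    norm_num at h3

theorem στ₃ (H : D.Fund e₁ e₂ e₃) : D.τ e₃ = D.σ e₃ := by
  rw [← D.σσ (D.τ e₃), H.fix₃]

theorem norm₃ (H : D.Fund e₁ e₂ e₃) : e₃ * D.σ e₃ = 1 ∨ e₃ * D.σ e₃ = -1 := by
  refine D.fix_unit (isU_mul H.u₃ (isU_map D.σ H.u₃)) (by rw [map_mul, D.σσ, mul_comm]) ?_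
  rw [map_mul, ← D.στ, H.fix₃, H.στ₃, mul_comm]

/-- If `ε₃` has norm `1` then it is a square in `F`: writing `ε₃ = x + y√(2p)`, the equation
`x² - 2py² = 1` splits and gives `ε₃ = (a√d + b√d')²` with `dd' = 2p`. -/
theorem sqrt₃ (H : D.Fund e₁ e₂ e₃) (hp : p.Prime) (hp8 : p % 8 = 1) (h : e₃ * D.σ e₃ = 1) : ∃ u, IsU u ∧ u ^ 2 = e₃ := by
  have := D.charZero
  suffices ∃ u, u ^ 2 = e₃ by
    obtain ⟨u, hu⟩ := this
    exact ⟨u, isU_of_sq H.u₃ hu, hu⟩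
  obtain ⟨x, y, hx⟩ := D.fixστ H.fix₃
  have hαβ : (D.α * D.β) ^ 2 = (2 * p : ℕ) := by rw [mul_pow, D.hα, D.hβ]; push_cast; ring
  obtain ⟨⟨X, hX⟩, hn, hx0⟩ :=
    D.norm_one_coords D.σ hαβ (by simp [D.σα, D.σβ]) hx H.u₃ H.pos₃ h
  obtain ⟨x', y', rfl, rfl, hy⟩ := unit_coords_2p hp hp8 hX hn
  obtain ⟨d, d', a, b, hdd, hxx, hyy⟩ := pell_split (n := 2 * p) (by have := hp.pos; omega)
    (by exact_mod_cast hx0) (hy rfl) (by exact_mod_cast hn)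
  have hxL : (((x' : ℚ)) : L) = d * (a : L) ^ 2 + d' * (b : L) ^ 2 := by rw [hxx]; push_cast; ring
  have hyL : (((y' : ℚ)) : L) = 2 * a * b := by rw [hyy]; push_cast; ring
  -- the square roots of `d` and `d'` lie in `F`, with product `αβ`
  suffices h5 : ∃ γ γ' : L, γ ^ 2 = d ∧ γ' ^ 2 = d' ∧ γ * γ' = D.α * D.β by
    obtain ⟨γ, γ', h6, h7, h8⟩ := h5
    refine ⟨a * γ + b * γ', ?_⟩
    rw [hx, hxL, hyL, ← h6, ← h7, ← h8]; ring
  obtain ⟨d₁, d₂, hd1, hd2, hd3⟩ := (Nat.dvd_mul).1 (Dvd.intro _ hdd)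
  rcases (Nat.dvd_prime Nat.prime_two).1 hd1 with r1 | r1 <;>
    rcases (Nat.dvd_prime hp).1 hd2 with r2 | r2 <;> subst hd3 <;> rw [r1, r2] at hdd ⊢
  · have : d' = 2 * p := by linarith
    exact ⟨1, D.α * D.β, by simp, by rw [hαβ, this], by ring⟩
  · have : d' = 2 := Nat.eq_of_mul_eq_mul_left hp.pos (by linarith)
    exact ⟨D.β, D.α, by rw [D.hβ]; simp, by rw [D.hα, this]; simp, by ring⟩
  · have : d' = p := by linarith
    exact ⟨D.α, D.β, by rw [D.hα]; simp, by rw [D.hβ, this], by ring⟩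
  · have : d' = 1 := Nat.eq_of_mul_eq_mul_left (by have := hp.pos; omega : 0 < 2 * p)
      (by linarith)
    exact ⟨D.α * D.β, 1, hαβ, by simp [this], by ring⟩

/-! ### The square root of `ε₁ε₂ε₃` -/

theorem isU_prod (H : D.Fund e₁ e₂ e₃) : IsU (e₁ * e₂ * e₃) := isU_mul (isU_mul H.u₁ H.u₂) H.u₃

/-- Ramification: if `k² = sε₁ε₂ε₃` with `s` squarefree, and the conjugates of `k` are the unit
multiples of `k` given by `hσ`, `hτ` and `hστ`, then only the primes `2` and `p`, which divide the
discriminant, can divide `s`. For a prime `q ∣ s`, all traces of `k·x`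
with `x` integral are divisible by `q`, hence `8pk` is divisible by `q`. -/
theorem prime_dvd (H : D.Fund e₁ e₂ e₃) {k : L} {s q : ℕ} (hs : Squarefree s) (hq : q.Prime) (hqs : q ∣ s)
    (hk : k ^ 2 = s * (e₁ * e₂ * e₃)) (hσ : D.σ k = k * (e₂ * e₃)⁻¹)
    (hτ : D.τ k = k * (e₁ * e₃)⁻¹) (hστ : D.σ (D.τ k) = -(k * (e₁ * e₂)⁻¹)) : q ∣ 2 * p := by
  have := D.charZero
  by_contra hq2p
  obtain ⟨s', hs'⟩ := hqs
  have hq0 : (q : L) ≠ 0 := by exact_mod_cast hq.ne_zero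
  have hiN (n : ℕ) : IsIntegral ℤ (n : L) := by
    simpa using isIntegral_algebraMap (R := ℤ) (A := L) (x := n)
  have hiZ (n : ℤ) : IsIntegral ℤ (n : L) := by
    simpa using isIntegral_algebraMap (R := ℤ) (A := L) (x := n)
  have hiα : IsIntegral ℤ D.α := IsIntegral.of_pow (n := 2) (by norm_num) (by
    rw [D.hα]; simpa using hiN 2)
  have hiβ : IsIntegral ℤ D.β := IsIntegral.of_pow (n := 2) (by norm_num) (by
    rw [D.hβ]; exact hiN p)
  have hik : IsIntegral ℤ k := IsIntegral.of_pow (n := 2) (by norm_num) (by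
    rw [hk]; exact (hiN s).mul H.isU_prod.2.1)
  have htr (x : L) (hx : IsIntegral ℤ x) : ∃ m : ℤ,
      k * x + D.σ (k * x) + D.τ (k * x) + D.σ (D.τ (k * x)) = q * m := by
    have hiy : IsIntegral ℤ (k * x) := hik.mul hx
    obtain ⟨n, hn⟩ := D.fix_int (x := k * x + D.σ (k * x) + D.τ (k * x) + D.σ (D.τ (k * x)))
      (((hiy.add (map_isIntegral_int D.σ hiy)).add (map_isIntegral_int D.τ hiy)).add
        (map_isIntegral_int D.σ (map_isIntegral_int D.τ hiy)))
      (by simp only [map_add, D.σσ]; ring)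
      (by simp only [map_add, D.ττ, D.στ]; ring)
    set w := x + (e₂ * e₃)⁻¹ * D.σ x + (e₁ * e₃)⁻¹ * D.τ x - (e₁ * e₂)⁻¹ * D.σ (D.τ x) with hw
    have hnw : (n : L) = k * w := by
      rw [← hn, hw]; simp only [map_mul]; rw [hστ, hσ, hτ]; ring
    have hiw : IsIntegral ℤ w :=
      ((hx.add ((isU_mul H.u₂ H.u₃).2.2.mul (map_isIntegral_int D.σ hx))).add
        ((isU_mul H.u₁ H.u₃).2.2.mul (map_isIntegral_int D.τ hx))).sub
        ((isU_mul H.u₁ H.u₂).2.2.mul (map_isIntegral_int D.σ (map_isIntegral_int D.τ hx)))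
    have h1 : (n : L) ^ 2 = q * (s' * (e₁ * e₂ * e₃) * w ^ 2) := by
      rw [hnw, mul_pow, hk, hs']; push_cast; ring
    obtain ⟨m, hm⟩ := exists_int (L := L) (a := (n : ℚ) ^ 2 / q) (by
      push_cast
      rw [h1, mul_div_cancel_left₀ _ hq0]
      exact ((hiN s').mul H.isU_prod.2.1).mul (hiw.pow 2))
    have hqd : (q : ℤ) ∣ n ^ 2 := by
      refine ⟨m, ?_⟩
      have hq0' : (q : ℚ) ≠ 0 := by exact_mod_cast hq.ne_zero
      rw [div_eq_iff hq0'] at hm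
      have : (n : ℚ) ^ 2 = q * m := by rw [hm]; ring
      exact_mod_cast this
    obtain ⟨m', hm'⟩ := Int.Prime.dvd_pow' hq hqd
    exact ⟨m', by rw [hn, hm']; push_cast; ring⟩
  obtain ⟨a, b, c, d, habcd⟩ := D.span k
  have hσk : D.σ k = a - b * D.α + c * D.β - d * (D.α * D.β) := by
    rw [habcd]; simp [D.σα, D.σβ]; ring
  have hτk : D.τ k = a + b * D.α - c * D.β - d * (D.α * D.β) := by
    rw [habcd]; simp [D.τα, D.τβ]; ring
  have hστk : D.σ (D.τ k) = a - b * D.α - c * D.β + d * (D.α * D.β) := by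
    rw [hτk]; simp [D.σα, D.σβ]; ring
  obtain ⟨m₀, h₀⟩ := htr 1 isIntegral_one
  obtain ⟨m₁, h₁⟩ := htr D.α hiα
  obtain ⟨m₂, h₂⟩ := htr D.β hiβ
  obtain ⟨m₃, h₃⟩ := htr (D.α * D.β) (hiα.mul hiβ)
  simp only [map_mul, map_neg, D.σα, D.σβ, D.τα, D.τβ, mul_one] at h₀ h₁ h₂ h₃
  rw [hστk, hσk, hτk] at h₀ h₁ h₂ h₃
  rw [habcd] at h₀ h₁ h₂ h₃
  have g₀ : 4 * (a : L) = q * m₀ := by linear_combination h₀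
  have g₁ : 8 * (b : L) = q * m₁ := by linear_combination h₁ - 4 * b * D.hα
  have g₂ : 4 * p * (c : L) = q * m₂ := by linear_combination h₂ - 4 * c * D.hβ
  have g₃ : 8 * p * (d : L) = q * m₃ := by
    linear_combination h₃ - 4 * d * D.β ^ 2 * D.hα - 8 * d * D.hβ
  set g : L := m₀ * (2 * p : ℕ) + m₁ * p * D.α + m₂ * (2 : ℕ) * D.β + m₃ * (D.α * D.β) with hg
  have hgi : IsIntegral ℤ g :=
    ((((hiZ _).mul (hiN _)).add (((hiZ _).mul (hiN _)).mul hiα)).add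
      (((hiZ _).mul (hiN _)).mul hiβ)).add ((hiZ _).mul (hiα.mul hiβ))
  have hkg : 8 * p * k = q * g := by
    rw [habcd, hg]; push_cast
    linear_combination 2 * p * g₀ + p * D.α * g₁ + 2 * D.β * g₂ + D.α * D.β * g₃
  have h1 : ((8 * p) ^ 2 * s : L) / q ^ 2 = g ^ 2 * (e₁ * e₂ * e₃)⁻¹ := by
    rw [div_eq_iff (pow_ne_zero 2 hq0), eq_comm]
    have hη := H.isU_prod.1
    calc g ^ 2 * (e₁ * e₂ * e₃)⁻¹ * q ^ 2 = (q * g) ^ 2 * (e₁ * e₂ * e₃)⁻¹ := by ring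
      _ = (8 * p) ^ 2 * s * ((e₁ * e₂ * e₃) * (e₁ * e₂ * e₃)⁻¹) := by
        rw [← hkg, mul_pow, hk]; ring
      _ = _ := by rw [mul_inv_cancel₀ hη, mul_one]
  obtain ⟨m, hm⟩ := exists_int (L := L) (a := (8 * p : ℚ) ^ 2 * s / q ^ 2) (by
    push_cast
    rw [h1]
    exact (hgi.pow 2).mul H.isU_prod.2.2)
  have hdvd : q ^ 2 ∣ (8 * p) ^ 2 * s := by
    have hq0' : (q : ℚ) ^ 2 ≠ 0 := by exact_mod_cast pow_ne_zero 2 hq.ne_zero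
    rw [div_eq_iff hq0'] at hm
    have : ((q : ℤ) ^ 2) ∣ (8 * p) ^ 2 * s := ⟨m, by
      have : ((8 * p : ℚ)) ^ 2 * s = q ^ 2 * m := by rw [hm]; ring
      exact_mod_cast this⟩
    exact_mod_cast this
  have hco : Nat.Coprime q (8 * p) := by
    rw [Nat.Prime.coprime_iff_not_dvd hq]
    intro h
    apply hq2p
    rcases hq.dvd_mul.1 h with h2 | h2
    · exact (hq.dvd_of_dvd_pow (n := 3) (by simpa using h2)).mul_right p
    · exact h2.mul_left 2
  have h3 : q * q ∣ s := by
    rw [← sq]; exact (Nat.Coprime.pow 2 2 hco).dvd_of_dvd_mul_left hdvd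
  exact hq.one_lt.ne' (Nat.isUnit_iff.1 (hs q h3))

/-- If `ε₃` has norm `-1`, then `ε₁ε₂ε₃` is a square in `F`. With `k = ε₁ε₂ε₃ + ε₁ + ε₂ - ε₃`
(which is `√(ε₁ε₂ε₃)` times its would-be trace), `k² / ε₁ε₂ε₃` is a rational integer whose
squarefree part divides `2p`, so it is a square in `F`. -/
theorem sqrt_prod (H : D.Fund e₁ e₂ e₃) (hp : p.Prime) (hp8 : p % 8 = 1) (h : e₃ * D.σ e₃ = -1) :
    ∃ u, IsU u ∧ u ^ 2 = e₁ * e₂ * e₃ := by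
  have := D.charZero
  suffices ∃ u, u ^ 2 = e₁ * e₂ * e₃ by
    obtain ⟨u, hu⟩ := this
    exact ⟨u, isU_of_sq H.isU_prod hu, hu⟩
  have n1 := H.u₁.1
  have n2 := H.u₂.1
  have n3 := H.u₃.1
  have hτ1 : D.τ e₁ = -e₁⁻¹ := by
    have := H.norm₁ hp hp8
    field_simp; linear_combination this
  have hσ2 : D.σ e₂ = -e₂⁻¹ := by
    have := H.norm₂
    field_simp; linear_combination this
  have hσ3 : D.σ e₃ = -e₃⁻¹ := by
    field_simp; linear_combination h
  have hτ3 : D.τ e₃ = -e₃⁻¹ := by rw [H.στ₃, hσ3]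
  set k := e₁ * e₂ * e₃ + e₁ + e₂ - e₃ with hkdef
  have hσk : D.σ k = k * (e₂ * e₃)⁻¹ := by
    rw [hkdef]; simp only [map_add, map_sub, map_mul, H.fix₁, hσ2, hσ3]
    field_simp; ring
  have hτk : D.τ k = k * (e₁ * e₃)⁻¹ := by
    rw [hkdef]; simp only [map_add, map_sub, map_mul, H.fix₂, hτ1, hτ3]
    field_simp; ring
  have hστk : D.σ (D.τ k) = -(k * (e₁ * e₂)⁻¹) := by
    rw [hτk, map_mul, hσk, map_inv₀, map_mul, H.fix₁, hσ3]
    field_simp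
  have hφk : 0 < D.φ k := by
    rw [hkdef]; simp only [map_add, map_sub, map_mul]
    have h1 := H.pos₁
    have h2 := H.pos₂
    have h3 := H.pos₃
    have h12 : 1 < D.φ e₁ * D.φ e₂ := by nlinarith
    nlinarith
  have hik : IsIntegral ℤ k :=
    ((H.isU_prod.2.1.add H.u₁.2.1).add H.u₂.2.1).sub H.u₃.2.1
  obtain ⟨R, hR⟩ := D.fix_int (x := k ^ 2 * (e₁ * e₂ * e₃)⁻¹) ((hik.pow 2).mul H.isU_prod.2.2)
    (by
      simp only [map_mul, map_pow, map_inv₀, H.fix₁, hσ2, hσ3, hσk]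
      field_simp)
    (by
      simp only [map_mul, map_pow, map_inv₀, H.fix₂, hτ1, hτ3, hτk]
      field_simp)
  have hR0 : 0 < R := by
    have h1 : D.φ (k ^ 2 * (e₁ * e₂ * e₃)⁻¹) = R := by rw [hR]; simp
    simp only [map_mul, map_pow, map_inv₀] at h1
    have h1' := H.pos₁
    have h2' := H.pos₂
    have h3' := H.pos₃
    have : (0 : ℝ) < R := by rw [← h1]; positivity
    exact_mod_cast this
  lift R to ℕ using hR0.le
  obtain ⟨s, f, hsf, hs⟩ := Nat.sq_mul_squarefree R
  have hf0 : f ≠ 0 := by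
    rintro rfl
    simp at hsf; omega
  have hf0' : (f : L) ≠ 0 := by exact_mod_cast hf0
  have hk2 : k ^ 2 = R * (e₁ * e₂ * e₃) := by
    have : k ^ 2 = (k ^ 2 * (e₁ * e₂ * e₃)⁻¹) * (e₁ * e₂ * e₃) := by field_simp
    rw [this, hR]; simp
  have hk1 : (k / f) ^ 2 = s * (e₁ * e₂ * e₃) := by
    rw [div_pow, hk2, ← hsf]; push_cast; field_simp
  have hs2p : s ∣ 2 * p := by
    have hsub : s.primeFactors ⊆ ({2, p} : Finset ℕ) := by
      intro q hq
      have hqp := Nat.prime_of_mem_primeFactors hq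
      have := H.prime_dvd hs hqp (Nat.dvd_of_mem_primeFactors hq) hk1
        (by rw [map_div₀, hσk, map_natCast]; ring) (by rw [map_div₀, hτk, map_natCast]; ring)
        (by rw [map_div₀, map_div₀, hστk, map_natCast, map_natCast]; ring)
      rcases hqp.dvd_mul.1 this with h1 | h1
      · simp [(Nat.prime_dvd_prime_iff_eq hqp Nat.prime_two).1 h1]
      · simp [(Nat.prime_dvd_prime_iff_eq hqp hp).1 h1]
    have h1 := Finset.prod_dvd_prod_of_subset _ _ (fun q : ℕ => q) hsub
    rwa [Nat.prod_primeFactors_of_squarefree hs, Finset.prod_pair (by omega)] at h1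
  obtain ⟨γ, hγ⟩ : ∃ γ : L, γ ^ 2 = s := by
    obtain ⟨d₁, d₂, hd1, hd2, rfl⟩ := (Nat.dvd_mul).1 hs2p
    have g1 : ∃ γ : L, γ ^ 2 = d₁ := by
      rcases (Nat.dvd_prime Nat.prime_two).1 hd1 with rfl | rfl
      · exact ⟨1, by simp⟩
      · exact ⟨D.α, by simp [D.hα]⟩
    have g2 : ∃ γ : L, γ ^ 2 = d₂ := by
      rcases (Nat.dvd_prime hp).1 hd2 with rfl | rfl
      · exact ⟨1, by simp⟩
      · exact ⟨D.β, by simp [D.hβ]⟩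
    obtain ⟨a, ha⟩ := g1
    obtain ⟨b, hb⟩ := g2
    exact ⟨a * b, by rw [mul_pow, ha, hb]; push_cast; ring⟩
  have hs0 : (s : L) ≠ 0 := by exact_mod_cast hs.ne_zero
  refine ⟨k / f / γ, ?_⟩
  rw [div_pow, hk1, hγ, mul_div_cancel_left₀ _ hs0]

/-! ### The unit group of the biquadratic field -/

/-- The square of every unit of `F` is a product of relative norms, hence a product of powers of
the three fundamental units. -/
theorem sq_eq (H : D.Fund e₁ e₂ e₃) {t : L} (ht : IsU t) : ∃ a b c : ℤ, t ^ 2 = e₁ ^ a * e₂ ^ b * e₃ ^ c := by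
  have n3 := H.u₃.1
  have hσt := isU_map D.σ ht
  have hτt := isU_map D.τ ht
  have hστt := isU_map D.σ hτt
  obtain ⟨a, ha⟩ := H.gen₁ (t * D.σ t) (isU_mul ht hσt) (by rw [map_mul, D.σσ, mul_comm])
  obtain ⟨b, hb⟩ := H.gen₂ (t * D.τ t) (isU_mul ht hτt) (by rw [map_mul, D.ττ, mul_comm])
  obtain ⟨c, hc⟩ := H.gen₃ (D.σ t * D.τ t) (isU_mul hσt hτt)
    (by rw [map_mul, map_mul, D.ττ, ← D.στ t, D.σσ, mul_comm])
  refine ⟨a, b, -c, ?_⟩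
  have key : t ^ 2 = (t * D.σ t) * (t * D.τ t) * (D.σ t * D.τ t)⁻¹ := by
    have := ht.1; have := hσt.1; have := hτt.1
    field_simp
  have hpm : t ^ 2 = e₁ ^ a * e₂ ^ b * e₃ ^ (-c) ∨ t ^ 2 = -(e₁ ^ a * e₂ ^ b * e₃ ^ (-c)) := by
    rw [key, zpow_neg]
    rcases ha with ha | ha <;> rcases hb with hb | hb <;> rcases hc with hc | hc <;>
      rw [ha, hb, hc] <;> simp [inv_neg]
  refine hpm.resolve_right fun h => ?_
  have h1 : D.φ t ^ 2 = -(D.φ e₁ ^ a * D.φ e₂ ^ b * D.φ e₃ ^ (-c)) := by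
    rw [← map_pow, h]; simp only [map_neg, map_mul, map_zpow₀]
  have h1' := H.pos₁
  have h2' := H.pos₂
  have h3' := H.pos₃
  have : 0 < D.φ e₁ ^ a * D.φ e₂ ^ b * D.φ e₃ ^ (-c) := by positivity
  nlinarith [sq_nonneg (D.φ t)]

/-- The relative norm of `t` to `ℚ(√p)` has square
`ε₁^(2a) N(ε₂)^b N(ε₃)^c`, which cannot be negative in a real field. Once the norms of `ε₂` and `ε₃`
are known, this is a parity condition on `b` and `c`. -/
theorem parityσ (H : D.Fund e₁ e₂ e₃) {t : L} (ht : t ≠ 0) {a b c : ℤ} (h : t ^ 2 = e₁ ^ a * e₂ ^ b * e₃ ^ c) :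
    (e₂ * D.σ e₂) ^ b * (e₃ * D.σ e₃) ^ c ≠ -1 := by
  intro h1
  refine D.sq_ne_neg_sq (x := t * D.σ t) (y := e₁ ^ a) (mul_ne_zero ht ((map_ne_zero _).2 ht)) ?_
  rw [mul_pow, ← map_pow, h]
  simp only [map_mul, map_zpow₀, H.fix₁]
  rw [mul_zpow, mul_zpow] at h1
  linear_combination (e₁ ^ a) ^ 2 * h1

/-- The analogue of `parityσ` for the relative norm to `ℚ(√2)`. -/
theorem parityτ (H : D.Fund e₁ e₂ e₃) {t : L} (ht : t ≠ 0) {a b c : ℤ} (h : t ^ 2 = e₁ ^ a * e₂ ^ b * e₃ ^ c) :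
    (e₁ * D.τ e₁) ^ a * (e₃ * D.σ e₃) ^ c ≠ -1 := by
  intro h1
  refine D.sq_ne_neg_sq (x := t * D.τ t) (y := e₂ ^ b) (mul_ne_zero ht ((map_ne_zero _).2 ht)) ?_
  rw [mul_pow, ← map_pow, h]
  simp only [map_mul, map_zpow₀, H.fix₂, H.στ₃]
  rw [mul_zpow, mul_zpow] at h1
  linear_combination (e₂ ^ b) ^ 2 * h1

theorem part_i (H : D.Fund e₁ e₂ e₃) (hp : p.Prime) (hp8 : p % 8 = 1) :
    (∃ u, IsU u ∧ u ^ 2 = e₁ * e₂ * e₃ ∧ ∀ t, IsU t → ∃ a b c : ℤ,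
      t = u ^ a * e₂ ^ b * e₃ ^ c ∨ t = -(u ^ a * e₂ ^ b * e₃ ^ c)) ↔ e₃ * D.σ e₃ = -1 := by
  have h1 := H.norm₁ hp hp8
  have h2 := H.norm₂
  constructor
  · rintro ⟨u, hu, hu2, -⟩
    refine H.norm₃.resolve_left fun h3 => ?_
    have := H.parityσ hu.1 (a := 1) (b := 1) (c := 1) (by simpa using hu2)
    rw [h2, h3] at this
    simp at this
  · intro h3
    obtain ⟨u, hu, hu2⟩ := H.sqrt_prod hp hp8 h3
    refine ⟨u, hu, hu2, fun t ht => ?_⟩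
    obtain ⟨a, b, c, habc⟩ := H.sq_eq ht
    have hm1 : (-1 : L) ≠ 0 := by simp
    have hbc : Even (b + c) := by
      have := H.parityσ ht.1 habc
      rw [h2, h3, ← zpow_add₀ hm1] at this
      exact even_of_pow this
    have hac : Even (a + c) := by
      have := H.parityτ ht.1 habc
      rw [h1, h3, ← zpow_add₀ hm1] at this
      exact even_of_pow this
    -- `t² = u^(2a) ε₂^(b - a) ε₃^(c - a)` with even exponents
    obtain ⟨b', hb'⟩ : Even (b - a) := by grind
    obtain ⟨c', hc'⟩ : Even (c - a) := by grind
    refine ⟨a, b', c', sq_eq_sq_iff_eq_or_eq_neg.1 ?_⟩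
    have n1 := H.u₁.1
    have n2 := H.u₂.1
    have n3 := H.u₃.1
    have hu' : (u ^ a) ^ 2 = e₁ ^ a * e₂ ^ a * e₃ ^ a := by
      rw [← mul_zpow, ← mul_zpow, ← hu2, ← zpow_natCast, ← zpow_natCast, ← zpow_mul, ← zpow_mul,
        mul_comm]
    have hbb : (e₂ ^ b') ^ 2 * e₂ ^ a = e₂ ^ b := by
      rw [← zpow_natCast, ← zpow_mul, ← zpow_add₀ n2]; congr 1; push_cast; omega
    have hcc : (e₃ ^ c') ^ 2 * e₃ ^ a = e₃ ^ c := by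
      rw [← zpow_natCast, ← zpow_mul, ← zpow_add₀ n3]; congr 1; push_cast; omega
    rw [mul_pow, mul_pow, hu', habc, ← hbb, ← hcc]; ring

theorem part_ii (H : D.Fund e₁ e₂ e₃) (hp : p.Prime) (hp8 : p % 8 = 1) :
    (∃ u, IsU u ∧ u ^ 2 = e₃ ∧ ∀ t, IsU t → ∃ a b c : ℤ,
      t = e₁ ^ a * e₂ ^ b * u ^ c ∨ t = -(e₁ ^ a * e₂ ^ b * u ^ c)) ↔ e₃ * D.σ e₃ = 1 := by
  have h1 := H.norm₁ hp hp8
  have h2 := H.norm₂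
  constructor
  · rintro ⟨u, hu, hu2, -⟩
    refine H.norm₃.resolve_right fun h3 => ?_
    have := H.parityσ hu.1 (a := 0) (b := 0) (c := 1) (by simpa using hu2)
    rw [h2, h3] at this
    simp at this
  · intro h3
    obtain ⟨u, hu, hu2⟩ := H.sqrt₃ hp hp8 h3
    refine ⟨u, hu, hu2, fun t ht => ?_⟩
    obtain ⟨a, b, c, habc⟩ := H.sq_eq ht
    obtain ⟨b', hb'⟩ : Even b := by
      have := H.parityσ ht.1 habc
      rw [h2, h3, one_zpow, mul_one] at this
      exact even_of_pow this
    obtain ⟨a', ha'⟩ : Even a := by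
      have := H.parityτ ht.1 habc
      rw [h1, h3, one_zpow, mul_one] at this
      exact even_of_pow this
    refine ⟨a', b', c, sq_eq_sq_iff_eq_or_eq_neg.1 ?_⟩
    have n1 := H.u₁.1
    have n2 := H.u₂.1
    have hu' : (u ^ c) ^ 2 = e₃ ^ c := by
      rw [← hu2, ← zpow_natCast, ← zpow_natCast, ← zpow_mul, ← zpow_mul, mul_comm]
    rw [mul_pow, mul_pow, hu', habc, ha', hb', zpow_add₀ n1, zpow_add₀ n2]; ring

end Fund

end BiqData

/-! ### The subfields of `ℂ` -/

theorem sq_sqrt_complex (n : ℕ) : ((Real.sqrt n : ℝ) : ℂ) ^ 2 = n := by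
  rw [← Complex.ofReal_pow, Real.sq_sqrt (Nat.cast_nonneg n)]; simp

theorem isAlgebraic_sqrt (n : ℕ) : IsAlgebraic ℚ ((Real.sqrt n : ℝ) : ℂ) := by
  refine IsAlgebraic.of_pow (n := 2) (by norm_num) ?_
  rw [sq_sqrt_complex]
  simpa using isAlgebraic_algebraMap (R := ℚ) (A := ℂ) (n : ℚ)

theorem mem_Qsqrt {n : ℕ} {x : ℂ} :
    x ∈ Qsqrt n ↔ ∃ a b : ℚ, x = a + b * ((Real.sqrt n : ℝ) : ℂ) := by
  have hs := sq_sqrt_complex n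
  constructor
  · intro hx
    have hx' : x ∈ Algebra.adjoin ℚ {((Real.sqrt n : ℝ) : ℂ)} := by
      rw [← IntermediateField.adjoin_simple_toSubalgebra_of_isAlgebraic (isAlgebraic_sqrt n)]
      exact hx
    clear hx
    induction hx' using Algebra.adjoin_induction with
    | mem x hx => exact ⟨0, 1, by simpa using hx⟩
    | algebraMap r => exact ⟨r, 0, by simp⟩
    | add x y hx hy ih1 ih2 =>
      obtain ⟨a, b, rfl⟩ := ih1
      obtain ⟨a', b', rfl⟩ := ih2
      exact ⟨a + a', b + b', by push_cast; ring⟩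
    | mul x y hx hy ih1 ih2 =>
      obtain ⟨a, b, rfl⟩ := ih1
      obtain ⟨a', b', rfl⟩ := ih2
      exact ⟨a * a' + n * b * b', a * b' + b * a', by push_cast; linear_combination b * b' * hs⟩
  · rintro ⟨a, b, rfl⟩
    have h1 : ((Real.sqrt n : ℝ) : ℂ) ∈ Qsqrt n := IntermediateField.mem_adjoin_simple_self _ _
    have h2 (q : ℚ) : (q : ℂ) ∈ Qsqrt n := by
      simp
    exact add_mem (h2 a) (mul_mem (h2 b) h1)

theorem Fbiq_span {p : ℕ} {x : ℂ} (hx : x ∈ Fbiq p) : ∃ a b c d : ℚ,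
    x = a + b * ((Real.sqrt 2 : ℝ) : ℂ) + c * ((Real.sqrt p : ℝ) : ℂ)
      + d * (((Real.sqrt 2 : ℝ) : ℂ) * ((Real.sqrt p : ℝ) : ℂ)) := by
  have h2 : ((Real.sqrt 2 : ℝ) : ℂ) ^ 2 = 2 := by exact_mod_cast sq_sqrt_complex 2
  have hp := sq_sqrt_complex p
  have hx' : x ∈ Algebra.adjoin ℚ {((Real.sqrt p : ℝ) : ℂ), ((Real.sqrt 2 : ℝ) : ℂ)} := by
    rw [← IntermediateField.adjoin_toSubalgebra_of_isAlgebraic]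
    · exact hx
    · rintro y (rfl | rfl)
      · exact isAlgebraic_sqrt p
      · exact_mod_cast isAlgebraic_sqrt 2
  clear hx
  induction hx' using Algebra.adjoin_induction with
  | mem x hx =>
    rcases hx with rfl | rfl
    · exact ⟨0, 0, 1, 0, by simp⟩
    · exact ⟨0, 1, 0, 0, by simp⟩
  | algebraMap r => exact ⟨r, 0, 0, 0, by simp⟩
  | add x y hx hy ih1 ih2 =>
    obtain ⟨a, b, c, d, rfl⟩ := ih1
    obtain ⟨a', b', c', d', rfl⟩ := ih2
    exact ⟨a + a', b + b', c + c', d + d', by push_cast; ring⟩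
  | mul x y hx hy ih1 ih2 =>
    obtain ⟨a, b, c, d, rfl⟩ := ih1
    obtain ⟨a', b', c', d', rfl⟩ := ih2
    generalize ((Real.sqrt 2 : ℝ) : ℂ) = s at *
    generalize ((Real.sqrt p : ℝ) : ℂ) = t at *
    refine ⟨a * a' + 2 * b * b' + p * c * c' + 2 * p * d * d',
      a * b' + b * a' + p * c * d' + p * d * c',
      a * c' + c * a' + 2 * b * d' + 2 * d * b', a * d' + d * a' + b * c' + c * b', ?_⟩
    push_cast
    rw [← h2, ← hp]; ring

/-- `√n` is irrational, in homogeneous form. -/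
theorem rat_sq_eq_zero {n : ℕ} (hn : ¬ IsSquare n) {x y : ℚ} (h : x ^ 2 = n * y ^ 2) :
    x = 0 ∧ y = 0 := by
  have hy : y = 0 := by
    by_contra hy
    apply hn
    rw [← Rat.isSquare_natCast_iff]
    exact ⟨x / y, by field_simp; linear_combination -h⟩
  subst hy
  exact ⟨by simpa using h, rfl⟩

/-- `1, √2, √p, √2√p` are linearly independent over `ℚ`. -/
theorem biq_indep {p : ℕ} (h2p : ¬ IsSquare (2 * p)) (hp : ¬ IsSquare p) {L : Type*} [Field L]
    [CharZero L] {α β : L} (hα : α ^ 2 = 2) (hβ : β ^ 2 = p) {a b c d : ℚ}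
    (h : (a : L) + b * α + c * β + d * (α * β) = 0) : a = 0 ∧ b = 0 ∧ c = 0 ∧ d = 0 := by
  have h2 : ¬ IsSquare 2 := Nat.prime_two.prime.not_isSquare
  have irr {u v : ℚ} (huv : (u : L) + v * α = 0) : u = 0 ∧ v = 0 := by
    apply rat_sq_eq_zero h2
    have : ((u ^ 2 : ℚ) : L) = ((2 * v ^ 2 : ℚ) : L) := by
      push_cast
      linear_combination ((u : L) - v * α) * huv + (v : L) ^ 2 * hα
    exact_mod_cast Rat.cast_injective this
  -- `(a + bα)² = p (c + dα)²`
  obtain ⟨h3, h4⟩ := irr (u := a ^ 2 + 2 * b ^ 2 - p * (c ^ 2 + 2 * d ^ 2))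
    (v := 2 * a * b - 2 * p * c * d) (by
      push_cast
      linear_combination ((a : L) + b * α - c * β - d * (α * β)) * h
        - ((b : L) ^ 2 - p * (d : L) ^ 2) * hα + ((c : L) + d * α) ^ 2 * hβ)
  have h5 : (a ^ 2 - p * c ^ 2) * (a ^ 2 - 2 * p * d ^ 2) = 0 := by
    linear_combination a ^ 2 * h3 - (a * b + p * c * d) * h4
  rcases mul_eq_zero.1 h5 with h6 | h6
  · obtain ⟨rfl, rfl⟩ := rat_sq_eq_zero hp (x := a) (y := c) (by linarith)
    obtain ⟨rfl, rfl⟩ := rat_sq_eq_zero hp (x := b) (y := d) (by linarith)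
    simp
  · obtain ⟨rfl, rfl⟩ := rat_sq_eq_zero h2p (x := a) (y := d) (by push_cast; linarith)
    obtain ⟨h7, rfl⟩ := rat_sq_eq_zero h2p (x := 2 * b) (y := c) (by push_cast; linarith)
    simp only [mul_eq_zero, OfNat.ofNat_ne_zero, false_or] at h7
    simp [h7]

/-- A field with basis `1, α, β, αβ` over `ℚ`, where `α² = 2` and `β² = p`, maps to any field
with a choice of square roots of `2` and `p`. -/
theorem exists_biq_hom {p : ℕ} (h2p : ¬ IsSquare (2 * p)) (hp : ¬ IsSquare p) {L : Type*} [Field L]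
    [CharZero L] {α β : L} (hα : α ^ 2 = 2) (hβ : β ^ 2 = p)
    (hspan : ∀ x : L, ∃ a b c d : ℚ, x = a + b * α + c * β + d * (α * β))
    {M : Type*} [Field M] [CharZero M] {α' β' : M} (hα' : α' ^ 2 = 2) (hβ' : β' ^ 2 = p) :
    ∃ f : L →+* M, f α = α' ∧ f β = β' := by
  choose A B C D hx using hspan
  have uniq {x : L} {a b c d : ℚ} (h : x = a + b * α + c * β + d * (α * β)) :
      A x = a ∧ B x = b ∧ C x = c ∧ D x = d := by
    have h1 : ((A x - a : ℚ) : L) + ((B x - b : ℚ) : L) * α + ((C x - c : ℚ) : L) * β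
        + ((D x - d : ℚ) : L) * (α * β) = 0 := by
      push_cast
      linear_combination h - hx x
    obtain ⟨g1, g2, g3, g4⟩ := biq_indep h2p hp hα hβ h1
    exact ⟨by linarith, by linarith, by linarith, by linarith⟩
  let f : L → M := fun x => A x + B x * α' + C x * β' + D x * (α' * β')
  have hf {x : L} {a b c d : ℚ} (h : x = a + b * α + c * β + d * (α * β)) :
      f x = a + b * α' + c * β' + d * (α' * β') := by
    obtain ⟨g1, g2, g3, g4⟩ := uniq h
    simp only [f, g1, g2, g3, g4]
  refine ⟨⟨⟨⟨f, ?_⟩, ?_⟩, ?_, ?_⟩, ?_, ?_⟩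
  · show f 1 = 1
    rw [hf (a := 1) (b := 0) (c := 0) (d := 0) (by simp)]; simp
  · intro x y
    show f (x * y) = f x * f y
    rw [hf (x := x * y) (a := A x * A y + 2 * B x * B y + p * C x * C y + 2 * p * D x * D y)
      (b := A x * B y + B x * A y + p * C x * D y + p * D x * C y)
      (c := A x * C y + C x * A y + 2 * B x * D y + 2 * D x * B y)
      (d := A x * D y + D x * A y + B x * C y + C x * B y)]
    · simp only [f]; push_cast; rw [← hα', ← hβ']; ring
    · nth_rw 1 [hx x, hx y]; push_cast; rw [← hα, ← hβ]; ring
  · show f 0 = 0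
    rw [hf (a := 0) (b := 0) (c := 0) (d := 0) (by simp)]; simp
  · intro x y
    show f (x + y) = f x + f y
    rw [hf (x := x + y) (a := A x + A y) (b := B x + B y) (c := C x + C y) (d := D x + D y)]
    · simp only [f]; push_cast; ring
    · nth_rw 1 [hx x, hx y]; push_cast; ring
  · show f α = α'
    rw [hf (a := 0) (b := 1) (c := 0) (d := 0) (by simp)]; simp
  · show f β = β'
    rw [hf (a := 0) (b := 0) (c := 1) (d := 0) (by simp)]; simp

theorem not_isSquare_two_mul {p : ℕ} (hp8 : p % 8 = 1) : ¬ IsSquare (2 * p) := by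
  rintro ⟨r, hr⟩
  have h2 : (2 * p) % 4 = 2 := by omega
  rw [hr, Nat.mul_mod] at h2
  have : r % 4 < 4 := Nat.mod_lt _ (by norm_num)
  interval_cases r % 4 <;> omega

/-- Explicit presentation of `Fbiq p`, with the real embedding compatible with the inclusion
into `ℂ`. -/
theorem exists_biqData {p : ℕ} (hp : p.Prime) (hp8 : p % 8 = 1) : ∃ D : BiqData p (Fbiq p),
    (D.α : ℂ) = (Real.sqrt 2 : ℝ) ∧ (D.β : ℂ) = (Real.sqrt p : ℝ) ∧
    ∀ x : Fbiq p, (x : ℂ) = (D.φ x : ℝ) := by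
  have hp' : ¬ IsSquare p := hp.prime.not_isSquare
  have h2p := not_isSquare_two_mul hp8
  let α : Fbiq p := ⟨(Real.sqrt 2 : ℝ), IntermediateField.subset_adjoin _ _ (by simp)⟩
  let β : Fbiq p := ⟨(Real.sqrt p : ℝ), IntermediateField.subset_adjoin _ _ (by simp)⟩
  have hα : α ^ 2 = 2 := Subtype.ext (by
    have := sq_sqrt_complex 2
    push_cast at this ⊢
    exact this)
  have hβ : β ^ 2 = p := Subtype.ext (by
    have := sq_sqrt_complex p
    push_cast at this ⊢
    exact this)
  have hspan : ∀ x : Fbiq p, ∃ a b c d : ℚ, x = a + b * α + c * β + d * (α * β) := by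
    intro x
    obtain ⟨a, b, c, d, h⟩ := Fbiq_span x.2
    refine ⟨a, b, c, d, Subtype.ext ?_⟩
    rw [h]; push_cast; rfl
  obtain ⟨σ, σα, σβ⟩ := exists_biq_hom h2p hp' hα hβ hspan (α' := -α) (β' := β)
    (by rw [neg_sq, hα]) hβ
  obtain ⟨τ, τα, τβ⟩ := exists_biq_hom h2p hp' hα hβ hspan (α' := α) (β' := -β)
    hα (by rw [neg_sq, hβ])
  obtain ⟨φ, φα, φβ⟩ := exists_biq_hom h2p hp' hα hβ hspan (α' := Real.sqrt 2) (β' := Real.sqrt p)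
    (Real.sq_sqrt (by norm_num)) (Real.sq_sqrt (Nat.cast_nonneg p))
  refine ⟨⟨α, β, σ, τ, φ, hα, hβ, σα, σβ, τα, τβ, hspan⟩, rfl, rfl, fun x => ?_⟩
  obtain ⟨a, b, c, d, rfl⟩ := hspan x
  simp only [map_add, map_mul, map_ratCast, φα, φβ]
  push_cast
  rfl

/-- The norm form of a real quadratic field. -/
theorem norm_Qsqrt {n : ℕ} (hn : ¬ IsSquare n) (z : Qsqrt n) {x y : ℚ}
    (hz : (z : ℂ) = x + y * ((Real.sqrt n : ℝ) : ℂ)) :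
    Algebra.norm ℚ z = x ^ 2 - n * y ^ 2 := by
  let ρ : Qsqrt n := ⟨(Real.sqrt n : ℝ), IntermediateField.mem_adjoin_simple_self _ _⟩
  have hρ : ρ ^ 2 = n := Subtype.ext (by
    have := sq_sqrt_complex n
    push_cast at this ⊢
    exact this)
  have hz' : z = (x : Qsqrt n) + y * ρ := Subtype.ext (by rw [hz]; push_cast; rfl)
  have hli : LinearIndependent ℚ ![1, ρ] := by
    rw [LinearIndependent.pair_iff]
    intro s t hst
    simp only [Rat.smul_def, mul_one] at hst
    apply rat_sq_eq_zero hn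
    have : ((s ^ 2 : ℚ) : Qsqrt n) = ((n * t ^ 2 : ℚ) : Qsqrt n) := by
      push_cast
      linear_combination ((s : Qsqrt n) - t * ρ) * hst + (t : Qsqrt n) ^ 2 * hρ
    exact Rat.cast_injective this
  have hsp : ⊤ ≤ Submodule.span ℚ (Set.range ![1, ρ]) := by
    rintro w -
    obtain ⟨a, b, hw⟩ := mem_Qsqrt.1 w.2
    rw [Matrix.range_cons, Matrix.range_cons, Matrix.range_empty, Set.union_empty,
      Set.singleton_union, Submodule.mem_span_pair]
    refine ⟨a, b, Subtype.ext ?_⟩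
    rw [hw, Rat.smul_def, Rat.smul_def, mul_one]; push_cast; rfl
  let B := Module.Basis.mk hli hsp
  have hB0 : B 0 = 1 := by simp [B]
  have hB1 : B 1 = ρ := by simp [B]
  have e0 : z * B 0 = x • B 0 + y • B 1 := by
    rw [hB0, hB1, hz', Rat.smul_def, Rat.smul_def]; ring
  have e1 : z * B 1 = (n * y) • B 0 + x • B 1 := by
    rw [hB0, hB1, hz', Rat.smul_def, Rat.smul_def]; push_cast
    linear_combination (y : Qsqrt n) * hρ
  rw [Algebra.norm_eq_matrix_det B, Matrix.det_fin_two]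
  simp only [Algebra.leftMulMatrix_eq_repr_mul, e0, e1, map_add, map_smul, B.repr_self]
  simp
  ring

theorem isU_units {K : IntermediateField ℚ ℂ} (u : (𝓞 K)ˣ) : IsU ((u : 𝓞 K) : K) := by
  refine ⟨?_, (u : 𝓞 K).2, ?_⟩
  · simp
  · have : (((u : 𝓞 K) : K))⁻¹ = ((u⁻¹ : (𝓞 K)ˣ) : 𝓞 K) := by
      apply inv_eq_of_mul_eq_one_right
      rw [← map_mul]; simp
    rw [this]
    exact ((u⁻¹ : (𝓞 K)ˣ) : 𝓞 K).2

theorem exists_unit {K : IntermediateField ℚ ℂ} {x : K} (hx : IsU x) :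
    ∃ u : (𝓞 K)ˣ, ((u : 𝓞 K) : K) = x :=
  ⟨⟨⟨x, hx.2.1⟩, ⟨x⁻¹, hx.2.2⟩, RingOfIntegers.ext (mul_inv_cancel₀ hx.1),
    RingOfIntegers.ext (inv_mul_cancel₀ hx.1)⟩, rfl⟩

/-- An element of a subfield `K` is a unit in `K` as soon as it is one in `F`. -/
theorem exists_unit_of_mem {K F : IntermediateField ℚ ℂ} {x : F} (hx : IsU x)
    (hK : (x : ℂ) ∈ K) : ∃ u : (𝓞 K)ˣ, (((u : 𝓞 K) : K) : ℂ) = x := by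
  have hinj : Function.Injective (algebraMap K ℂ) := (algebraMap K ℂ).injective
  have h : IsU (⟨x, hK⟩ : K) := by
    refine ⟨?_, ?_, ?_⟩
    · intro h
      exact hx.1 (Subtype.ext (congrArg (Subtype.val : K → ℂ) h))
    · rw [← isIntegral_algebraMap_iff (B := ℂ) hinj]
      exact map_isIntegral_int (algebraMap F ℂ) hx.2.1
    · rw [← isIntegral_algebraMap_iff (B := ℂ) hinj]
      have := map_isIntegral_int (algebraMap F ℂ) hx.2.2
      rw [map_inv₀] at this ⊢
      exact this
  obtain ⟨u, hu⟩ := exists_unit h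
  exact ⟨u, by rw [hu]⟩

theorem coe_units_zpow {K : IntermediateField ℚ ℂ} (u : (𝓞 K)ˣ) (n : ℤ) :
    (((u ^ n : (𝓞 K)ˣ) : 𝓞 K) : K) = ((u : 𝓞 K) : K) ^ n := by
  have h1 := map_zpow (Units.map (algebraMap (𝓞 K) K).toMonoidHom) u n
  have h2 := congrArg (fun v : Kˣ => (v : K)) h1
  rw [Units.val_zpow_eq_zpow_val] at h2
  exact h2

theorem coe_units_neg {K : IntermediateField ℚ ℂ} (u : (𝓞 K)ˣ) :
    (((-u : (𝓞 K)ˣ) : 𝓞 K) : K) = -((u : 𝓞 K) : K) := rfl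

theorem coe_units_mul {K : IntermediateField ℚ ℂ} (u v : (𝓞 K)ˣ) :
    (((u * v : (𝓞 K)ˣ) : 𝓞 K) : K) = ((u : 𝓞 K) : K) * ((v : 𝓞 K) : K) := rfl

theorem coe_units_inclusion {K F : IntermediateField ℚ ℂ} (h : K ≤ F) (ε : (𝓞 K)ˣ) :
    (((Units.map (RingOfIntegers.mapRingHom (IntermediateField.inclusion h)).toMonoidHom ε :
      (𝓞 F)ˣ) : 𝓞 F) : F) = IntermediateField.inclusion h ((ε : 𝓞 K) : K) := rfl

/-- Transport of the generation property of a fundamental unit from a quadratic subfield. -/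
theorem gen_of_fundamental {K F : IntermediateField ℚ ℂ} {ε : (𝓞 K)ˣ} (hε : IsFundamentalUnit ε)
    {e : F} (he : (e : ℂ) = ((ε : 𝓞 K) : K)) {x : F} (hx : IsU x) (hK : (x : ℂ) ∈ K) :
    ∃ n : ℤ, x = e ^ n ∨ x = -e ^ n := by
  obtain ⟨u, hu⟩ := exists_unit_of_mem hx hK
  obtain ⟨n, hn⟩ := hε.2 u
  have hz : ((((ε ^ n : (𝓞 K)ˣ) : 𝓞 K) : K) : ℂ) = (e : ℂ) ^ n := by
    rw [he, coe_units_zpow]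
    exact map_zpow₀ (algebraMap K ℂ) _ n
  refine ⟨n, hn.imp (fun h => Subtype.ext ?_) (fun h => Subtype.ext ?_)⟩
  · rw [← hu, h, hz]
    exact (map_zpow₀ (algebraMap F ℂ) e n).symm
  · rw [← hu, h, coe_units_neg, IntermediateField.coe_neg, hz, IntermediateField.coe_neg]
    exact congrArg _ (map_zpow₀ (algebraMap F ℂ) e n).symm

theorem pos_of_fundamental {p : ℕ} {D : BiqData p (Fbiq p)} (hφ : ∀ x : Fbiq p, (x : ℂ) = (D.φ x : ℝ))
    {K : IntermediateField ℚ ℂ} {ε : (𝓞 K)ˣ} (hε : IsFundamentalUnit ε)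
    {e : Fbiq p} (he : (e : ℂ) = ((ε : 𝓞 K) : K)) : 1 < D.φ e := by
  obtain ⟨r, hr, h⟩ := hε.1
  rw [← he, hφ, Complex.ofReal_inj] at h
  rwa [h]

/-- Equalities between monomials in units may be checked in the field. -/
theorem unit_monomial_iff {K : IntermediateField ℚ ℂ} (t u v w : (𝓞 K)ˣ) (a b c : ℤ) :
    (t = u ^ a * v ^ b * w ^ c ∨ t = -(u ^ a * v ^ b * w ^ c)) ↔
    (((t : 𝓞 K) : K) = ((u : 𝓞 K) : K) ^ a * ((v : 𝓞 K) : K) ^ b * ((w : 𝓞 K) : K) ^ c ∨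
      ((t : 𝓞 K) : K) =
        -(((u : 𝓞 K) : K) ^ a * ((v : 𝓞 K) : K) ^ b * ((w : 𝓞 K) : K) ^ c)) := by
  have hinj : Function.Injective (fun v : (𝓞 K)ˣ => ((v : 𝓞 K) : K)) := fun x y h =>
    Units.ext (RingOfIntegers.ext h)
  rw [← hinj.eq_iff, ← hinj.eq_iff]
  simp only [coe_units_neg, coe_units_mul, coe_units_zpow]

theorem statement_4 (p : ℕ) (hp : p.Prime) (hp8 : p % 8 = 1)
    (h₁ : Qsqrt p ≤ Fbiq p) (h₂ : Qsqrt 2 ≤ Fbiq p) (h₃ : Qsqrt (2 * p) ≤ Fbiq p)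
    (ε₁ : (𝓞 (Qsqrt p))ˣ) (ε₂ : (𝓞 (Qsqrt 2))ˣ) (ε₃ : (𝓞 (Qsqrt (2 * p)))ˣ)
    (hε₁ : IsFundamentalUnit ε₁) (hε₂ : IsFundamentalUnit ε₂) (hε₃ : IsFundamentalUnit ε₃)
    -- the images of ε₁, ε₂, ε₃ in the unit group of F :
    (e₁ e₂ e₃ : (𝓞 (Fbiq p))ˣ)
    (he₁ : e₁ = Units.map (RingOfIntegers.mapRingHom (IntermediateField.inclusion h₁)).toMonoidHom ε₁)
    (he₂ : e₂ = Units.map (RingOfIntegers.mapRingHom (IntermediateField.inclusion h₂)).toMonoidHom ε₂)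
    (he₃ : e₃ = Units.map (RingOfIntegers.mapRingHom (IntermediateField.inclusion h₃)).toMonoidHom ε₃) :
    ((∃ u : (𝓞 (Fbiq p))ˣ, u ^ 2 = e₁ * e₂ * e₃ ∧ IsFundamentalSystem u e₂ e₃) ↔
      Algebra.norm ℚ ((ε₃ : 𝓞 (Qsqrt (2 * p))) : Qsqrt (2 * p)) = -1) ∧
    ((∃ u : (𝓞 (Fbiq p))ˣ, u ^ 2 = e₃ ∧ IsFundamentalSystem e₁ e₂ u) ↔
      Algebra.norm ℚ ((ε₃ : 𝓞 (Qsqrt (2 * p))) : Qsqrt (2 * p)) = 1) := by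
  obtain ⟨D, hDα, hDβ, hφ⟩ := exists_biqData hp hp8
  have c₁ : (((e₁ : 𝓞 (Fbiq p)) : Fbiq p) : ℂ) = ((ε₁ : 𝓞 (Qsqrt p)) : Qsqrt p) := by
    rw [he₁, coe_units_inclusion, IntermediateField.coe_inclusion]
  have c₂ : (((e₂ : 𝓞 (Fbiq p)) : Fbiq p) : ℂ) = ((ε₂ : 𝓞 (Qsqrt 2)) : Qsqrt 2) := by
    rw [he₂, coe_units_inclusion, IntermediateField.coe_inclusion]
  have c₃ : (((e₃ : 𝓞 (Fbiq p)) : Fbiq p) : ℂ) = ((ε₃ : 𝓞 (Qsqrt (2 * p))) : Qsqrt (2 * p)) := by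
    rw [he₃, coe_units_inclusion, IntermediateField.coe_inclusion]
  have hs2 : ((Real.sqrt (2 : ℕ) : ℝ) : ℂ) = D.α := by rw [hDα]; simp
  have hs2p : ((Real.sqrt (2 * p : ℕ) : ℝ) : ℂ) = D.α * D.β := by
    rw [hDα, hDβ, ← Complex.ofReal_mul, ← Real.sqrt_mul (by norm_num)]; simp
  obtain ⟨x₃, y₃, hxy⟩ := mem_Qsqrt.1 ((ε₃ : 𝓞 (Qsqrt (2 * p))) : Qsqrt (2 * p)).2
  have hE₃ : ((e₃ : 𝓞 (Fbiq p)) : Fbiq p) = x₃ + y₃ * (D.α * D.β) := Subtype.ext (by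
    rw [c₃, hxy, hs2p]; push_cast; rfl)
  have H : D.Fund ((e₁ : 𝓞 (Fbiq p)) : Fbiq p) ((e₂ : 𝓞 (Fbiq p)) : Fbiq p)
      ((e₃ : 𝓞 (Fbiq p)) : Fbiq p) := by
    refine ⟨isU_units _, isU_units _, isU_units _, pos_of_fundamental hφ hε₁ c₁,
      pos_of_fundamental hφ hε₂ c₂, pos_of_fundamental hφ hε₃ c₃, ?_, ?_, ?_, ?_, ?_, ?_⟩
    · obtain ⟨a, b, h⟩ := mem_Qsqrt.1 ((ε₁ : 𝓞 (Qsqrt p)) : Qsqrt p).2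
      have hE : ((e₁ : 𝓞 (Fbiq p)) : Fbiq p) = a + b * D.β := Subtype.ext (by
        rw [c₁, h, ← hDβ]; push_cast; rfl)
      rw [hE]; simp [D.σβ]
    · obtain ⟨a, b, h⟩ := mem_Qsqrt.1 ((ε₂ : 𝓞 (Qsqrt 2)) : Qsqrt 2).2
      have hE : ((e₂ : 𝓞 (Fbiq p)) : Fbiq p) = a + b * D.α := Subtype.ext (by
        rw [c₂, h, hs2]; push_cast; rfl)
      rw [hE]; simp [D.τα]
    · rw [hE₃]; simp [D.τα, D.τβ, D.σα, D.σβ]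
    · intro x hx hfix
      refine gen_of_fundamental hε₁ c₁ hx (mem_Qsqrt.2 ?_)
      obtain ⟨a, b, rfl⟩ := D.fixσ hfix
      exact ⟨a, b, by rw [← hDβ]; push_cast; rfl⟩
    · intro x hx hfix
      refine gen_of_fundamental hε₂ c₂ hx (mem_Qsqrt.2 ?_)
      obtain ⟨a, b, rfl⟩ := D.fixτ hfix
      exact ⟨a, b, by rw [hs2]; push_cast; rfl⟩
    · intro x hx hfix
      refine gen_of_fundamental hε₃ c₃ hx (mem_Qsqrt.2 ?_)
      obtain ⟨a, b, rfl⟩ := D.fixστ hfix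
      exact ⟨a, b, by rw [hs2p]; push_cast; rfl⟩
  have hnorm : ((Algebra.norm ℚ ((ε₃ : 𝓞 (Qsqrt (2 * p))) : Qsqrt (2 * p)) : ℚ) : Fbiq p)
      = ((e₃ : 𝓞 (Fbiq p)) : Fbiq p) * D.σ ((e₃ : 𝓞 (Fbiq p)) : Fbiq p) := by
    rw [norm_Qsqrt (not_isSquare_two_mul hp8) _ hxy, hE₃]
    simp only [map_add, map_mul, map_ratCast, D.σα, D.σβ]
    push_cast
    linear_combination (y₃ : Fbiq p) ^ 2 * D.β ^ 2 * D.hα + 2 * (y₃ : Fbiq p) ^ 2 * D.hβ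
  have hinj : Function.Injective (fun v : (𝓞 (Fbiq p))ˣ => ((v : 𝓞 (Fbiq p)) : Fbiq p)) :=
    fun x y h => Units.ext (RingOfIntegers.ext h)
  constructor
  · have hN : Algebra.norm ℚ ((ε₃ : 𝓞 (Qsqrt (2 * p))) : Qsqrt (2 * p)) = -1 ↔
        ((e₃ : 𝓞 (Fbiq p)) : Fbiq p) * D.σ ((e₃ : 𝓞 (Fbiq p)) : Fbiq p) = -1 := by
      rw [← hnorm, ← Rat.cast_inj (α := Fbiq p)]; simp
    rw [hN, ← H.part_i hp hp8]
    constructor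
    · rintro ⟨u, hu, hfs⟩
      refine ⟨_, isU_units u, ?_, fun t ht => ?_⟩
      · simpa using congrArg (fun v : (𝓞 (Fbiq p))ˣ => ((v : 𝓞 (Fbiq p)) : Fbiq p)) hu
      · obtain ⟨t, rfl⟩ := exists_unit ht
        obtain ⟨a, b, c, h⟩ := hfs t
        exact ⟨a, b, c, (unit_monomial_iff _ _ _ _ _ _ _).1 h⟩
    · rintro ⟨u, hU, hu, hfs⟩
      obtain ⟨u, rfl⟩ := exists_unit hU
      refine ⟨u, hinj (by simpa using hu), fun t => ?_⟩
      obtain ⟨a, b, c, h⟩ := hfs _ (isU_units t)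
      exact ⟨a, b, c, (unit_monomial_iff _ _ _ _ _ _ _).2 h⟩
  · have hN : Algebra.norm ℚ ((ε₃ : 𝓞 (Qsqrt (2 * p))) : Qsqrt (2 * p)) = 1 ↔
        ((e₃ : 𝓞 (Fbiq p)) : Fbiq p) * D.σ ((e₃ : 𝓞 (Fbiq p)) : Fbiq p) = 1 := by
      rw [← hnorm, ← Rat.cast_inj (α := Fbiq p)]; simp
    rw [hN, ← H.part_ii hp hp8]
    constructor
    · rintro ⟨u, hu, hfs⟩
      refine ⟨_, isU_units u, ?_, fun t ht => ?_⟩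
      · simpa using congrArg (fun v : (𝓞 (Fbiq p))ˣ => ((v : 𝓞 (Fbiq p)) : Fbiq p)) hu
      · obtain ⟨t, rfl⟩ := exists_unit ht
        obtain ⟨a, b, c, h⟩ := hfs t
        exact ⟨a, b, c, (unit_monomial_iff _ _ _ _ _ _ _).1 h⟩
    · rintro ⟨u, hU, hu, hfs⟩
      obtain ⟨u, rfl⟩ := exists_unit hU
      refine ⟨u, hinj (by simpa using hu), fun t => ?_⟩
      obtain ⟨a, b, c, h⟩ := hfs _ (isU_units t)
      exact ⟨a, b, c, (unit_monomial_iff _ _ _ _ _ _ _).2 h⟩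
end
end
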